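/- arXiv:2203.00571 — 3 statements merged into one kernel-verified Lean document; each statement's English description precedes it below -/
import Mathlib

section
/- For every p ∈ [2,∞] there exists a constant C = C(p) > 0, independent of n, t and a, such that for all integers n ≥ 2, all t > 0, and all a ∈ ℝ^{n-1}: ‖exp(-A_n² t) a‖_{l^p_n} ≤ C t^{-(1/4)(1/2 - 1/p)} ‖a‖_{l²_n}, where exp denotes the matrix exponential and 1/∞ := 0. -/
noncomputable section

open Real Matrix Finset
open scoped ENNReal

/-- The matrix form `A_n` of the discrete Dirichlet Laplacian with mesh size `h = π/n`:
the `(n-1)×(n-1)` matrix `(n²/π²)·tridiag(1, -2, 1)`. -/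
def disLap (n : ℕ) : Matrix (Fin (n - 1)) (Fin (n - 1)) ℝ :=
  Matrix.of fun i j =>
    ((n : ℝ) ^ 2 / Real.pi ^ 2) *
      (if (i : ℕ) = (j : ℕ) then -2
       else if (i : ℕ) + 1 = (j : ℕ) ∨ (j : ℕ) + 1 = (i : ℕ) then 1 else 0)

/-- Discrete `l^p_n` norm `‖a‖ = ((π/n) Σ_{i=1}^{n-1} |a_i|^p)^{1/p}` for `1 ≤ p < ∞`. -/
def lpn (n : ℕ) (p : ℝ) (a : Fin (n - 1) → ℝ) : ℝ :=
  ((Real.pi / n) * ∑ i, |a i| ^ p) ^ (1 / p)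

/-- Discrete `l²_n` norm. -/
def l2n (n : ℕ) (a : Fin (n - 1) → ℝ) : ℝ :=
  Real.sqrt ((Real.pi / n) * ∑ i, (a i) ^ 2)

/-- Discrete `l^∞_n` norm. -/
def linfn (n : ℕ) (a : Fin (n - 1) → ℝ) : ℝ := ⨆ i, |a i|

/-- Discrete `l^p_n` norm for extended `p ∈ [1,∞]`. -/
def lpEn (n : ℕ) (p : ℝ≥0∞) (a : Fin (n - 1) → ℝ) : ℝ :=
  if p = ⊤ then linfn n a else lpn n p.toReal a

/-- Matrix exponential `exp M = Σ_{k≥0} M^k / k!`. -/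
def matExp {m : ℕ} (M : Matrix (Fin m) (Fin m) ℝ) : Matrix (Fin m) (Fin m) ℝ :=
  ∑' k : ℕ, ((k.factorial : ℝ)⁻¹) • M ^ k


lemma aux_matExp_eq {m : ℕ} (M : Matrix (Fin m) (Fin m) ℝ) : matExp M = NormedSpace.exp M := by
  unfold matExp
  rw [NormedSpace.exp_eq_tsum ℝ]

section
attribute [local instance] Matrix.linftyOpNormedRing Matrix.linftyOpNormedAlgebra

lemma aux_deriv {m : ℕ} (B : Matrix (Fin m) (Fin m) ℝ) (t : ℝ) :
    HasDerivAt (fun s : ℝ => NormedSpace.exp (s • B)) (B * NormedSpace.exp (t • B)) t :=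
  hasDerivAt_exp_smul_const' B t

lemma aux_deriv_vec {m : ℕ} (B : Matrix (Fin m) (Fin m) ℝ) (a : Fin m → ℝ) (t : ℝ) :
    HasDerivAt (fun s : ℝ => (NormedSpace.exp (s • B)).mulVec a)
      (B.mulVec ((NormedSpace.exp (t • B)).mulVec a)) t := by
  let L : Matrix (Fin m) (Fin m) ℝ →ₗ[ℝ] (Fin m → ℝ) :=
    { toFun := fun M => M.mulVec a
      map_add' := fun x y => Matrix.add_mulVec x y a
      map_smul' := fun c x => Matrix.smul_mulVec c x a }
  have h := (LinearMap.toContinuousLinearMap L).hasFDerivAt.comp_hasDerivAt t (aux_deriv B t)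
  rw [Matrix.mulVec_mulVec]
  exact h
end

lemma aux_dot {m : ℕ} {u v u' v' : ℝ → Fin m → ℝ} {t : ℝ} (hu : HasDerivAt u (u' t) t)
    (hv : HasDerivAt v (v' t) t) :
    HasDerivAt (fun s => u s ⬝ᵥ v s) (u' t ⬝ᵥ v t + u t ⬝ᵥ v' t) t := by
  simp only [dotProduct, ← Finset.sum_add_distrib]
  apply HasDerivAt.fun_sum
  intro i _
  exact (hasDerivAt_pi.1 hu i).mul (hasDerivAt_pi.1 hv i)

lemma aux_mulVec_deriv {m : ℕ} (A : Matrix (Fin m) (Fin m) ℝ) {u u' : ℝ → Fin m → ℝ} {t : ℝ}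
    (hu : HasDerivAt u (u' t) t) :
    HasDerivAt (fun s => A.mulVec (u s)) (A.mulVec (u' t)) t :=
  (LinearMap.toContinuousLinearMap (Matrix.mulVecLin A)).hasFDerivAt.comp_hasDerivAt t hu

/-- Energy estimate. -/
lemma aux_energy {m : ℕ} (A : Matrix (Fin m) (Fin m) ℝ) (hA : Aᵀ = A) (a : Fin m → ℝ) (t : ℝ)
    (ht : 0 < t) (u : Fin m → ℝ) (hu : u = (matExp ((-t) • (A * A))).mulVec a) :
    u ⬝ᵥ u + 2 * t * (A.mulVec u ⬝ᵥ A.mulVec u) ≤ a ⬝ᵥ a := by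
  set U : ℝ → Fin m → ℝ := fun s => (NormedSpace.exp (s • (-(A * A)))).mulVec a with hU
  have hUt : u = U t := by rw [hu, aux_matExp_eq, hU]; simp
  have hU0 : U 0 = a := by simp [hU, NormedSpace.exp_zero]
  have sym : ∀ x y : Fin m → ℝ, A.mulVec x ⬝ᵥ y = x ⬝ᵥ A.mulVec y := by
    intro x y
    rw [Matrix.dotProduct_mulVec, ← Matrix.mulVec_transpose, hA]
  have hd : ∀ s, HasDerivAt U (-(A.mulVec (A.mulVec (U s)))) s := by
    intro s
    have := aux_deriv_vec (-(A * A)) a s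
    rw [Matrix.neg_mulVec, ← Matrix.mulVec_mulVec] at this
    exact this
  set U1 : ℝ → Fin m → ℝ := fun s => -(A.mulVec (A.mulVec (U s))) with hU1
  set V1 : ℝ → Fin m → ℝ := fun s => A.mulVec (U1 s) with hV1
  have hd' : ∀ s, HasDerivAt (fun s => A.mulVec (U s)) (V1 s) s := fun s =>
    aux_mulVec_deriv A (u' := U1) (hd s)
  set φ : ℝ → ℝ := fun s => U s ⬝ᵥ U s + 2 * s * (A.mulVec (U s) ⬝ᵥ A.mulVec (U s)) with hφ
  have hφd : ∀ s, HasDerivAt φ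
      (-(4 * s * (A.mulVec (A.mulVec (U s)) ⬝ᵥ A.mulVec (A.mulVec (U s))))) s := by
    intro s
    have h1 := aux_dot (u' := U1) (v' := U1) (hd s) (hd s)
    have h2 := aux_dot (u' := V1) (v' := V1) (hd' s) (hd' s)
    have h3 : HasDerivAt (fun s : ℝ => 2 * s) 2 s := by
      simpa using (hasDerivAt_id s).const_mul 2
    have h4 := h1.add (h3.mul h2)
    have h5 : HasDerivAt φ _ s := h4
    refine h5.congr_deriv ?_
    simp only [hU1, hV1, sym, Matrix.mulVec_neg, neg_dotProduct, dotProduct_neg]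
    ring
  have hanti : AntitoneOn φ (Set.Ici 0) := by
    apply antitoneOn_of_deriv_nonpos (convex_Ici 0)
    · exact fun s _ => (hφd s).continuousAt.continuousWithinAt
    · exact fun s _ => (hφd s).differentiableAt.differentiableWithinAt
    · intro s hs
      rw [interior_Ici] at hs
      rw [(hφd s).deriv]
      have : 0 ≤ A.mulVec (A.mulVec (U s)) ⬝ᵥ A.mulVec (A.mulVec (U s)) :=
        Finset.sum_nonneg fun i _ => mul_self_nonneg _
      have h0 : (0 : ℝ) < s := hs
      have := mul_nonneg h0.le this
      linarith
  have := hanti (Set.mem_Ici.2 le_rfl) (Set.mem_Ici.2 ht.le) ht.le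
  have h0 : φ 0 = a ⬝ᵥ a := by rw [← hU0]; simp [φ]
  rw [h0] at this
  rw [hUt]
  exact this

def auxExt {m : ℕ} (u : Fin m → ℝ) (k : ℕ) : ℝ := ∑ j : Fin m, if (j : ℕ) + 1 = k then u j else 0

lemma auxExt_zero {m : ℕ} (u : Fin m → ℝ) : auxExt u 0 = 0 := by simp [auxExt]

lemma auxExt_last {m : ℕ} (u : Fin m → ℝ) : auxExt u (m + 1) = 0 := by
  apply Finset.sum_eq_zero
  intro j _
  rw [if_neg]
  have := j.2
  omega

lemma auxExt_succ {m : ℕ} (u : Fin m → ℝ) (i : Fin m) : auxExt u (i + 1) = u i := by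
  unfold auxExt
  rw [Finset.sum_eq_single i] <;> simp
  intro b hb h
  exact absurd (Fin.ext h) hb

lemma aux_row (n : ℕ) (u : Fin (n - 1) → ℝ) (i : Fin (n - 1)) :
    (disLap n).mulVec u i = ((n : ℝ) ^ 2 / Real.pi ^ 2) *
      (auxExt u (i + 2) - 2 * auxExt u (i + 1) + auxExt u i) := by
  simp only [Matrix.mulVec, dotProduct, disLap, Matrix.of_apply, auxExt, Finset.mul_sum,
    ← Finset.sum_add_distrib, ← Finset.sum_sub_distrib]
  apply Finset.sum_congr rfl
  intro j _
  rw [mul_assoc]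
  congr 1
  split_ifs <;> first | omega | ring

lemma aux_parts (w : ℕ → ℝ) (m : ℕ) :
    ∑ j ∈ range (m + 1), (w (j + 1) - w j) ^ 2 =
      -∑ j ∈ range m, w (j + 1) * (w (j + 2) - 2 * w (j + 1) + w j)
        + w (m + 1) * (w (m + 1) - w m) - w 0 * (w 1 - w 0) := by
  induction m with
  | zero => simp; ring
  | succ k ih => rw [Finset.sum_range_succ, ih, Finset.sum_range_succ]; ring

lemma aux_agmon (w : ℕ → ℝ) (m k : ℕ) (hk : k ≤ m) (h0 : w 0 = 0) (hl : w (m + 1) = 0) :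
    (w k) ^ 4 ≤ (∑ j ∈ range (m + 1), (w (j + 1) - w j) ^ 2) *
      (4 * ∑ j ∈ range m, (w (j + 1)) ^ 2) := by
  have h1 : (w k) ^ 2 = ∑ j ∈ range k, (w (j + 1) - w j) * (w (j + 1) + w j) := by
    have := Finset.sum_range_sub (fun j => (w j) ^ 2) k
    rw [h0] at this
    simp only [ne_eq, OfNat.ofNat_ne_zero, not_false_eq_true, zero_pow, sub_zero] at this
    rw [← this]
    exact Finset.sum_congr rfl fun j _ => by ring
  have hs : range k ⊆ range (m + 1) := Finset.range_mono (by omega)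
  have h2 : (w k) ^ 4 ≤ (∑ j ∈ range k, (w (j + 1) - w j) ^ 2) *
      ∑ j ∈ range k, (w (j + 1) + w j) ^ 2 := by
    calc (w k) ^ 4 = ((w k) ^ 2) ^ 2 := by ring
      _ ≤ _ := by rw [h1]; exact Finset.sum_mul_sq_le_sq_mul_sq _ _ _
  refine h2.trans (mul_le_mul ?_ ?_ (Finset.sum_nonneg fun _ _ => sq_nonneg _)
    (Finset.sum_nonneg fun _ _ => sq_nonneg _))
  · exact Finset.sum_le_sum_of_subset_of_nonneg hs fun _ _ _ => sq_nonneg _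
  · calc ∑ j ∈ range k, (w (j + 1) + w j) ^ 2
        ≤ ∑ j ∈ range (m + 1), (w (j + 1) + w j) ^ 2 :=
          Finset.sum_le_sum_of_subset_of_nonneg hs fun _ _ _ => sq_nonneg _
      _ ≤ ∑ j ∈ range (m + 1), (2 * (w (j + 1)) ^ 2 + 2 * (w j) ^ 2) :=
          Finset.sum_le_sum fun j _ => by nlinarith [sq_nonneg (w (j + 1) - w j)]
      _ = 4 * ∑ j ∈ range m, (w (j + 1)) ^ 2 := by
          rw [Finset.sum_add_distrib, ← Finset.mul_sum, ← Finset.mul_sum,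
            Finset.sum_range_succ, Finset.sum_range_succ' (fun j => (w j) ^ 2), h0, hl]
          ring

/-- `|u_i|^8 ≤ 16 h^4 |u|^6 |Au|^2`. -/
lemma aux_sup (n : ℕ) (hn : 2 ≤ n) (u : Fin (n - 1) → ℝ) (i : Fin (n - 1)) :
    (u i) ^ 8 ≤ 16 * (Real.pi / n) ^ 4 * (u ⬝ᵥ u) ^ 3 *
      ((disLap n).mulVec u ⬝ᵥ (disLap n).mulVec u) := by
  have hn0 : (n : ℝ) ≠ 0 := by positivity
  set w := auxExt u with hw
  set D := ∑ j ∈ range (n - 1 + 1), (w (j + 1) - w j) ^ 2 with hD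
  have hS : ∑ j ∈ range (n - 1), (w (j + 1)) ^ 2 = u ⬝ᵥ u := by
    rw [Finset.sum_range]
    simp only [dotProduct, hw, auxExt_succ]
    exact Finset.sum_congr rfl fun j _ => by ring
  have hDeq : D = -((Real.pi / n) ^ 2 * (u ⬝ᵥ (disLap n).mulVec u)) := by
    rw [hD, aux_parts, hw, auxExt_zero, auxExt_last, Finset.sum_range]
    simp only [dotProduct, aux_row, auxExt_succ, Finset.mul_sum]
    simp only [zero_mul, add_zero, sub_zero, neg_inj]
    apply Finset.sum_congr rfl
    intro j _
    field_simp
  have h1 := aux_agmon w (n - 1) (i + 1) (by have := i.2; omega) (auxExt_zero u) (auxExt_last u)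
  rw [hS, hw, auxExt_succ, ← hw, ← hD] at h1
  have hcs : (u ⬝ᵥ (disLap n).mulVec u) ^ 2 ≤
      (u ⬝ᵥ u) * ((disLap n).mulVec u ⬝ᵥ (disLap n).mulVec u) := by
    have := Finset.sum_mul_sq_le_sq_mul_sq Finset.univ u ((disLap n).mulVec u)
    simpa only [dotProduct, sq] using this
  have h2 : D ^ 2 ≤ (Real.pi / n) ^ 4 *
      ((u ⬝ᵥ u) * ((disLap n).mulVec u ⬝ᵥ (disLap n).mulVec u)) := by
    rw [hDeq]
    calc _ = (Real.pi / n) ^ 4 * (u ⬝ᵥ (disLap n).mulVec u) ^ 2 := by ring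
      _ ≤ _ := by gcongr
  calc (u i) ^ 8 = ((u i) ^ 4) ^ 2 := by ring
    _ ≤ (D * (4 * (u ⬝ᵥ u))) ^ 2 := by gcongr
    _ = 16 * (u ⬝ᵥ u) ^ 2 * D ^ 2 := by ring
    _ ≤ 16 * (u ⬝ᵥ u) ^ 2 * ((Real.pi / n) ^ 4 *
      ((u ⬝ᵥ u) * ((disLap n).mulVec u ⬝ᵥ (disLap n).mulVec u))) := by gcongr
    _ = _ := by ring

lemma disLap_symm (n : ℕ) : (disLap n)ᵀ = disLap n := by
  ext i j
  simp only [disLap, Matrix.transpose_apply, Matrix.of_apply]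
  congr 1
  split_ifs <;> first | rfl | omega

lemma l2n_sq (n : ℕ) (a : Fin (n - 1) → ℝ) : (l2n n a) ^ 2 = Real.pi / n * (a ⬝ᵥ a) := by
  unfold l2n
  rw [Real.sq_sqrt]
  · simp only [dotProduct, sq]
  · have : 0 ≤ ∑ i, (a i) ^ 2 := Finset.sum_nonneg fun _ _ => sq_nonneg _
    positivity

lemma aux_infty (n : ℕ) (hn : 2 ≤ n) (t : ℝ) (ht : 0 < t) (a u : Fin (n - 1) → ℝ)
    (hu : u = (matExp ((-t) • (disLap n * disLap n))).mulVec a) :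
    u ⬝ᵥ u ≤ a ⬝ᵥ a ∧ ∀ i, |u i| ≤ 2 * t ^ (-(1 / 8 : ℝ)) * l2n n a := by
  have hE := aux_energy (disLap n) (disLap_symm n) a t ht u hu
  have hN : 0 ≤ l2n n a := Real.sqrt_nonneg _
  have hAu : 0 ≤ (disLap n).mulVec u ⬝ᵥ (disLap n).mulVec u :=
    Finset.sum_nonneg fun i _ => mul_self_nonneg _
  have huu : 0 ≤ u ⬝ᵥ u := Finset.sum_nonneg fun i _ => mul_self_nonneg _
  have hle : u ⬝ᵥ u ≤ a ⬝ᵥ a := by nlinarith [mul_nonneg ht.le hAu]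
  have haa := huu.trans hle
  refine ⟨hle, fun i => ?_⟩
  have hs := aux_sup n hn u i
  set X := (disLap n).mulVec u ⬝ᵥ (disLap n).mulVec u
  have hX : X ≤ (a ⬝ᵥ a) / t := by
    rw [le_div_iff₀ ht]; nlinarith [mul_nonneg ht.le hAu]
  have ht8 : (t ^ (-(1 / 8 : ℝ))) ^ 8 = t⁻¹ := by
    rw [← Real.rpow_natCast, ← Real.rpow_mul ht.le]
    norm_num
    exact Real.rpow_neg_one t
  refine le_of_pow_le_pow_left₀ (n := 8) (by norm_num) (by positivity) ?_
  calc |u i| ^ 8 = (u i) ^ 8 := Even.pow_abs (by decide) _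
    _ ≤ 16 * (Real.pi / n) ^ 4 * (u ⬝ᵥ u) ^ 3 * X := hs
    _ ≤ 16 * (Real.pi / n) ^ 4 * (a ⬝ᵥ a) ^ 3 * ((a ⬝ᵥ a) / t) := by gcongr
    _ = 16 * t⁻¹ * (Real.pi / n * (a ⬝ᵥ a)) ^ 4 := by ring
    _ = 16 * t⁻¹ * (l2n n a) ^ 8 := by rw [← l2n_sq]; ring
    _ ≤ 256 * t⁻¹ * (l2n n a) ^ 8 := by gcongr; norm_num
    _ = _ := by rw [mul_pow, mul_pow, ht8]; norm_num

/-- For every `p ∈ [2,∞]` there is `C = C(p) > 0`, independent of `n`, `t` and `a`, such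
that for all `n ≥ 2`, `t > 0`, `a ∈ ℝ^{n-1}`:
`‖exp(-A_n² t) a‖_{l^p_n} ≤ C t^{-(1/4)(1/2 - 1/p)} ‖a‖_{l²_n}` (with `1/∞ := 0`). -/
theorem stmt3 (p : ℝ≥0∞) (hp : 2 ≤ p) :
    ∃ C : ℝ, 0 < C ∧ ∀ n : ℕ, 2 ≤ n → ∀ t : ℝ, 0 < t → ∀ a : Fin (n - 1) → ℝ,
      lpEn n p ((matExp ((-t) • (disLap n * disLap n))).mulVec a)
        ≤ C * t ^ (-(1 / 4 : ℝ) * (1 / 2 - (p⁻¹).toReal)) * l2n n a := by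
  refine ⟨2, by norm_num, fun n hn t ht a => ?_⟩
  obtain ⟨h2, hinf⟩ := aux_infty n hn t ht a _ rfl
  set u := (matExp ((-t) • (disLap n * disLap n))).mulVec a
  have hN : 0 ≤ l2n n a := Real.sqrt_nonneg _
  unfold lpEn
  split_ifs with hp'
  · subst hp'
    have he : (-(1 / 4 : ℝ) * (1 / 2 - ((⊤ : ℝ≥0∞)⁻¹).toReal)) = -(1 / 8) := by
      norm_num
    rw [he]
    exact Real.iSup_le hinf (by positivity)
  · set q := p.toReal with hq
    have hq2 : 2 ≤ q := by
      have := ENNReal.toReal_mono hp' hp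
      simpa using this
    have hq0 : 0 < q := by linarith
    rw [ENNReal.toReal_inv, ← hq]
    set N := l2n n a with hNdef
    set s := t ^ (-(1 / 8 : ℝ)) with hs
    have hs0 : 0 < s := by positivity
    unfold lpn
    have key : Real.pi / n * ∑ i, |u i| ^ q ≤ (2 * t ^ (-(1 / 4 : ℝ) * (1 / 2 - q⁻¹)) * N) ^ q := by
      calc Real.pi / n * ∑ i, |u i| ^ q
          ≤ Real.pi / n * ∑ i, (2 * s * N) ^ (q - 2) * (u i * u i) := by
            gcongr with i _
            calc |u i| ^ q = |u i| ^ (q - 2) * |u i| ^ (2 : ℝ) := by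
                  rw [← Real.rpow_add_of_nonneg (abs_nonneg _) (by linarith) (by norm_num)]
                  congr 1; ring
              _ = |u i| ^ (q - 2) * (u i * u i) := by
                  rw [Real.rpow_two, sq_abs, sq]
              _ ≤ _ := by
                  apply mul_le_mul_of_nonneg_right _ (mul_self_nonneg _)
                  exact Real.rpow_le_rpow (abs_nonneg _) (hinf i) (by linarith)
        _ = (2 * s * N) ^ (q - 2) * (Real.pi / n * (u ⬝ᵥ u)) := by
            rw [← Finset.mul_sum]; simp only [dotProduct]; ring
        _ ≤ (2 * s * N) ^ (q - 2) * (Real.pi / n * (a ⬝ᵥ a)) := by gcongr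
        _ = (2 * s * N) ^ (q - 2) * N ^ (2 : ℝ) := by
            rw [← l2n_sq, Real.rpow_two]
        _ = 2 ^ (q - 2) * s ^ (q - 2) * (N ^ (q - 2) * N ^ (2 : ℝ)) := by
            rw [Real.mul_rpow (by positivity) hN, Real.mul_rpow (by norm_num) hs0.le]; ring
        _ = 2 ^ (q - 2) * s ^ (q - 2) * N ^ q := by
            rw [← Real.rpow_add_of_nonneg hN (by linarith) (by norm_num)]
            congr 2; ring
        _ ≤ 2 ^ q * s ^ (q - 2) * N ^ q := by
            gcongr
            · norm_num
            · linarith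
        _ = _ := by
            rw [Real.mul_rpow (by positivity) hN, Real.mul_rpow (by norm_num) (by positivity), hs,
              ← Real.rpow_mul ht.le, ← Real.rpow_mul ht.le]
            congr 3
            field_simp
            ring
    calc _ ≤ ((2 * t ^ (-(1 / 4 : ℝ) * (1 / 2 - q⁻¹)) * N) ^ q) ^ (1 / q) := by
          apply Real.rpow_le_rpow _ key (by positivity)
          have : 0 ≤ ∑ i, |u i| ^ q := Finset.sum_nonneg fun _ _ => by positivity
          positivity
      _ = _ := by
          rw [one_div q, Real.rpow_rpow_inv (by positivity) hq0.ne']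
end
end

section
/- For every α ∈ (0,1) and every T > 0 there exists a constant C = C(α,T) > 0, independent of n, such that for all integers n ≥ 2, all x, y ∈ (0,π), and all 0 ≤ s < t ≤ T: ∫₀ˢ ∫₀^π |G^n_{t-r}(x,z) - G^n_{s-r}(y,z)|² dz dr ≤ C (|x-y|² + (t-s)^{3α/4}), and ∫ₛᵗ ∫₀^π |G^n_{t-r}(x,z)|² dz dr ≤ C (t-s)^{3/4}. -/
noncomputable section

open Real intervalIntegral

/-- The Dirichlet eigenfunctions `φ_j(x) = √(2/π) sin(jx)` on `(0,π)`. -/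
def phiF (j : ℕ) (x : ℝ) : ℝ := Real.sqrt (2 / Real.pi) * Real.sin (j * x)

/-- The Green function of `∂_t + Δ²` with Dirichlet boundary conditions on `(0,π)`:
`G_t(x,y) = Σ_{j≥1} e^{-j⁴ t} φ_j(x) φ_j(y)`. -/
def GF (t x y : ℝ) : ℝ :=
  ∑' j : ℕ, Real.exp (-((j : ℝ) + 1) ^ 4 * t) * phiF (j + 1) x * phiF (j + 1) y

/-- `ΔG_t(x,y) = -Σ_{j≥1} j² e^{-j⁴ t} φ_j(x) φ_j(y)`. -/
def DGF (t x y : ℝ) : ℝ :=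
  -∑' j : ℕ, ((j : ℝ) + 1) ^ 2 * Real.exp (-((j : ℝ) + 1) ^ 4 * t) * phiF (j + 1) x * phiF (j + 1) y

/-- The grid projection `κ_n(y) = h⌊y/h⌋` with `h = π/n`. -/
def kap (n : ℕ) (y : ℝ) : ℝ := (Real.pi / n) * ⌊y / (Real.pi / n)⌋

/-- The eigenvalue `λ_{j,n} = -(4n²/π²) sin²(jπ/(2n))` of the discrete Dirichlet Laplacian. -/
def lamEig (j n : ℕ) : ℝ :=
  -(4 * (n : ℝ) ^ 2 / Real.pi ^ 2) * Real.sin ((j : ℝ) * Real.pi / (2 * n)) ^ 2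

/-- The piecewise-linear interpolant `φ_{j,n}` of `φ_j` on the grid `{0, h, …, π}`. -/
def phiIn (n j : ℕ) (x : ℝ) : ℝ :=
  phiF j (kap n x)
    + ((n : ℝ) / Real.pi) * (x - kap n x) * (phiF j (kap n x + Real.pi / n) - phiF j (kap n x))

/-- The spatially discrete Green function
`G^n_t(x,y) = Σ_{j=1}^{n-1} e^{-λ_{j,n}² t} φ_{j,n}(x) φ_j(κ_n(y))`. -/
def Gn (n : ℕ) (t x y : ℝ) : ℝ :=
  ∑ j ∈ Finset.range (n - 1),
    Real.exp (-(lamEig (j + 1) n) ^ 2 * t) * phiIn n (j + 1) x * phiF (j + 1) (kap n y)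

/-- `Δ_nG^n_t(x,y) = Σ_{j=1}^{n-1} λ_{j,n} e^{-λ_{j,n}² t} φ_{j,n}(x) φ_j(κ_n(y))`. -/
def DGn (n : ℕ) (t x y : ℝ) : ℝ :=
  ∑ j ∈ Finset.range (n - 1),
    lamEig (j + 1) n * Real.exp (-(lamEig (j + 1) n) ^ 2 * t)
      * phiIn n (j + 1) x * phiF (j + 1) (kap n y)

/-- The fully discrete Green function
`G^{n,τ}_t(x,y) = Σ_{j=1}^{n-1} (1 + τλ_{j,n}²)^{-⌊t/τ⌋} φ_{j,n}(x) φ_j(κ_n(y))`. -/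
def Gnt (n : ℕ) (τ t x y : ℝ) : ℝ :=
  ∑ j ∈ Finset.range (n - 1),
    ((1 + τ * (lamEig (j + 1) n) ^ 2) ^ (⌊t / τ⌋₊))⁻¹ * phiIn n (j + 1) x * phiF (j + 1) (kap n y)

/-- `Δ_nG^{n,τ}_t(x,y) = Σ_{j=1}^{n-1} λ_{j,n} (1 + τλ_{j,n}²)^{-⌊t/τ⌋} φ_{j,n}(x) φ_j(κ_n(y))`. -/
def DGnt (n : ℕ) (τ t x y : ℝ) : ℝ :=
  ∑ j ∈ Finset.range (n - 1),
    lamEig (j + 1) n * ((1 + τ * (lamEig (j + 1) n) ^ 2) ^ (⌊t / τ⌋₊))⁻¹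
      * phiIn n (j + 1) x * phiF (j + 1) (kap n y)

open Finset in
lemma cos_sum_aux (n : ℕ) (m : ℤ) (hs : Real.sin (m * Real.pi / (2 * n)) ≠ 0) (hn : 0 < n) :
    ∑ k ∈ Finset.range n, Real.cos (m * (Real.pi / n * k)) = (1 - Real.cos (m * Real.pi)) / 2 := by
  have hn' : (n : ℝ) ≠ 0 := by positivity
  set β : ℝ := m * Real.pi / (2 * n) with hβ
  have key : ∀ N : ℕ, 2 * Real.sin β * ∑ k ∈ Finset.range N, Real.cos (m * (Real.pi / n * k))
      = Real.sin ((2 * N - 1) * β) + Real.sin β := by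
    intro N
    induction N with
    | zero => simp
    | succ N ih =>
      rw [Finset.sum_range_succ, mul_add, ih]
      have e1 : (m : ℝ) * (Real.pi / n * N) = 2 * N * β := by
        rw [hβ]; field_simp
      rw [e1]
      push_cast
      have e2 : (2 * ((N : ℝ) + 1) - 1) * β = 2 * N * β + β := by ring
      have e3 : (2 * (N : ℝ) - 1) * β = 2 * N * β - β := by ring
      rw [e2, e3, Real.sin_add, Real.sin_sub]
      ring
  have h := key n
  have e3 : (2 * (n : ℝ) - 1) * β = m * Real.pi - β := by
    rw [hβ]; field_simp
  rw [e3, Real.sin_sub, Real.sin_int_mul_pi] at h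
  have : 2 * Real.sin β * (∑ k ∈ Finset.range n, Real.cos (m * (Real.pi / n * k))
      - (1 - Real.cos (m * Real.pi)) / 2) = 0 := by
    rw [mul_sub, h]; ring
  have h2 : 2 * Real.sin β ≠ 0 := by simpa using hs
  rcases mul_eq_zero.1 this with h3 | h3
  · exact absurd h3 h2
  · linarith

lemma sin_ne_aux (n : ℕ) (hn : 0 < n) (m : ℤ) (h0 : m ≠ 0) (h1 : |m| < 2 * n) :
    Real.sin (m * Real.pi / (2 * n)) ≠ 0 := by
  have hn' : (0 : ℝ) < n := by positivity
  have hpi := Real.pi_pos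
  have hb : (|m| : ℝ) < 2 * n := by exact_mod_cast h1
  rw [abs_lt] at hb
  intro h
  rw [Real.sin_eq_zero_iff_of_lt_of_lt] at h
  · rw [div_eq_zero_iff] at h
    rcases h with h | h
    · rcases mul_eq_zero.1 h with h | h
      · exact h0 (by exact_mod_cast h)
      · exact hpi.ne' h
    · linarith
  · rw [lt_div_iff₀ (by positivity)]; nlinarith
  · rw [div_lt_iff₀ (by positivity)]; nlinarith

lemma orth_aux (n : ℕ) (hn : 2 ≤ n) (i j : ℕ) (hi : i < n - 1) (hj : j < n - 1) :
    Real.pi / n * ∑ k ∈ Finset.range n,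
      phiF (i + 1) (Real.pi / n * k) * phiF (j + 1) (Real.pi / n * k) = if i = j then 1 else 0 := by
  have hn0 : 0 < n := by omega
  have hn' : (n : ℝ) ≠ 0 := by positivity
  have hpi := Real.pi_pos
  have hsq : Real.sqrt (2 / Real.pi) * Real.sqrt (2 / Real.pi) = 2 / Real.pi :=
    Real.mul_self_sqrt (by positivity)
  have e : ∀ k : ℕ, phiF (i + 1) (Real.pi / n * k) * phiF (j + 1) (Real.pi / n * k)
      = (1 / Real.pi) * (Real.cos ((((i : ℤ) - j : ℤ) : ℝ) * (Real.pi / n * k))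
        - Real.cos ((((i : ℤ) + j + 2 : ℤ) : ℝ) * (Real.pi / n * k))) := by
    intro k
    unfold phiF
    push_cast
    set u := Real.pi / n * k
    have e1 : ((i : ℝ) - j) * u = (i + 1) * u - (j + 1) * u := by ring
    have e2 : ((i : ℝ) + j + 2) * u = (i + 1) * u + (j + 1) * u := by ring
    rw [e1, e2, Real.cos_sub, Real.cos_add]
    linear_combination (Real.sin ((i + 1) * u) * Real.sin ((j + 1) * u)) * hsq
  simp_rw [e]
  rw [← Finset.mul_sum, Finset.sum_sub_distrib]
  rw [cos_sum_aux n ((i : ℤ) + j + 2) (sin_ne_aux n hn0 _ (by omega) (by rw [abs_lt]; omega)) hn0]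
  split_ifs with hij
  · subst hij
    have : Real.cos ((((i : ℤ) + i + 2 : ℤ) : ℝ) * Real.pi) = 1 := by
      have := Real.cos_int_mul_two_pi ((i : ℤ) + 1)
      rw [← this]; push_cast; ring_nf
    rw [this]
    simp
    field_simp
  · rw [cos_sum_aux n ((i : ℤ) - j) (sin_ne_aux n hn0 _ (by omega) (by rw [abs_lt]; omega)) hn0]
    have : Real.cos ((((i : ℤ) + j + 2 : ℤ) : ℝ) * Real.pi)
        = Real.cos ((((i : ℤ) - j : ℤ) : ℝ) * Real.pi) := by
      have := Real.cos_add_int_mul_two_pi ((((i : ℤ) - j : ℤ) : ℝ) * Real.pi) ((j : ℤ) + 1)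
      rw [← this]; push_cast; ring_nf
    rw [this]; simp

lemma kap_eq_aux (n : ℕ) (hn : 0 < n) (k : ℕ) (z : ℝ) (h1 : Real.pi / n * k < z)
    (h2 : z < Real.pi / n * (k + 1)) : kap n z = Real.pi / n * k := by
  have hh : 0 < Real.pi / n := by have := Real.pi_pos; positivity
  unfold kap
  have : ⌊z / (Real.pi / n)⌋ = (k : ℤ) := by
    rw [Int.floor_eq_iff]
    constructor
    · rw [le_div_iff₀ hh]; push_cast; linarith
    · rw [div_lt_iff₀ hh]; push_cast; linarith
  rw [this]; simp

lemma int_kap_aux (n : ℕ) (hn : 0 < n) (f : ℝ → ℝ) :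
    ∫ z in (0:ℝ)..Real.pi, f (kap n z) = Real.pi / n * ∑ k ∈ Finset.range n, f (Real.pi / n * k) := by
  have hh : 0 < Real.pi / n := by have := Real.pi_pos; positivity
  have hn' : (n : ℝ) ≠ 0 := by positivity
  have hle : ∀ k : ℕ, Real.pi / n * (k : ℝ) ≤ Real.pi / n * ((k + 1 : ℕ) : ℝ) := by
    intro k; push_cast; nlinarith
  have hae : ∀ k : ℕ, ∀ᵐ z : ℝ, z ∈ Set.uIoc (Real.pi / n * (k : ℝ)) (Real.pi / n * ((k + 1 : ℕ) : ℝ)) →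
      f (Real.pi / n * k) = f (kap n z) := by
    intro k
    have : ∀ᵐ z : ℝ, z ≠ Real.pi / n * ((k + 1 : ℕ) : ℝ) := by
      simp [MeasureTheory.ae_iff]
    filter_upwards [this] with z hz hz2
    rw [Set.uIoc_of_le (hle k)] at hz2
    rw [kap_eq_aux n hn k z hz2.1]
    have := lt_of_le_of_ne hz2.2 hz
    push_cast at this; exact this
  have hint : ∀ k : ℕ, IntervalIntegrable (fun z => f (kap n z)) MeasureTheory.volume
      (Real.pi / n * (k : ℝ)) (Real.pi / n * ((k + 1 : ℕ) : ℝ)) := by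
    intro k
    have h0 : IntervalIntegrable (fun _ : ℝ => f (Real.pi / n * k)) MeasureTheory.volume
      (Real.pi / n * (k : ℝ)) (Real.pi / n * ((k + 1 : ℕ) : ℝ)) := intervalIntegrable_const
    refine h0.congr_ae ?_
    rw [Filter.EventuallyEq, MeasureTheory.ae_restrict_iff' measurableSet_uIoc]
    exact hae k
  have hs := intervalIntegral.sum_integral_adjacent_intervals (f := fun z => f (kap n z))
    (μ := MeasureTheory.volume) (a := fun k : ℕ => Real.pi / n * (k : ℝ)) (n := n) (fun k _ => hint k)
  simp only [Nat.cast_zero, mul_zero] at hs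
  have e : Real.pi / n * (n : ℝ) = Real.pi := by field_simp
  rw [e] at hs
  rw [← hs, Finset.mul_sum]
  refine Finset.sum_congr rfl fun k _ => ?_
  rw [← intervalIntegral.integral_congr_ae (hae k)]
  rw [intervalIntegral.integral_const, smul_eq_mul]
  push_cast
  ring

lemma parseval_aux (n : ℕ) (hn : 2 ≤ n) (a : ℕ → ℝ) :
    ∫ z in (0:ℝ)..Real.pi, (∑ j ∈ Finset.range (n - 1), a j * phiF (j + 1) (kap n z)) ^ 2
      = ∑ j ∈ Finset.range (n - 1), a j ^ 2 := by
  rw [int_kap_aux n (by omega) (fun w => (∑ j ∈ Finset.range (n - 1), a j * phiF (j + 1) w) ^ 2)]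
  simp_rw [sq, Finset.sum_mul_sum]
  rw [Finset.sum_comm, Finset.mul_sum]
  refine Finset.sum_congr rfl fun i hi => ?_
  rw [Finset.sum_comm, Finset.mul_sum]
  have : ∀ j ∈ Finset.range (n - 1), Real.pi / n * ∑ k ∈ Finset.range n,
      a i * phiF (i + 1) (Real.pi / n * k) * (a j * phiF (j + 1) (Real.pi / n * k))
      = if i = j then a i * a j else 0 := by
    intro j hj
    have h := orth_aux n hn i j (Finset.mem_range.1 hi) (Finset.mem_range.1 hj)
    have e : ∑ k ∈ Finset.range n,
      a i * phiF (i + 1) (Real.pi / n * k) * (a j * phiF (j + 1) (Real.pi / n * k))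
      = a i * a j * ∑ k ∈ Finset.range n,
        phiF (i + 1) (Real.pi / n * k) * phiF (j + 1) (Real.pi / n * k) := by
      rw [Finset.mul_sum]; exact Finset.sum_congr rfl fun k _ => by ring
    rw [e, mul_left_comm, h]; simp
  rw [Finset.sum_congr rfl this, Finset.sum_ite_eq, if_pos hi]

lemma sqrt_le_one_aux : Real.sqrt (2 / Real.pi) ≤ 1 := by
  rw [Real.sqrt_le_left zero_le_one, one_pow, div_le_one Real.pi_pos]
  linarith [Real.pi_gt_three]

lemma phiF_abs (j : ℕ) (x : ℝ) : |phiF j x| ≤ 1 := by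
  unfold phiF
  rw [abs_mul, abs_of_nonneg (Real.sqrt_nonneg _)]
  exact mul_le_one₀ sqrt_le_one_aux (abs_nonneg _) (Real.abs_sin_le_one _)

lemma sin_lip_aux (x y : ℝ) : |Real.sin x - Real.sin y| ≤ |x - y| := by
  rw [Real.sin_sub_sin, abs_mul, abs_mul]
  have h1 : |Real.sin ((x - y) / 2)| ≤ |(x - y) / 2| := Real.abs_sin_le_abs
  have h2 := Real.abs_cos_le_one ((x + y) / 2)
  have h3 : |(x - y) / 2| = |x - y| / 2 := by rw [abs_div]; simp
  have h4 : |(2:ℝ)| = 2 := by simp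
  rw [h4]
  have := mul_le_mul h1 h2 (abs_nonneg _) (abs_nonneg _)
  linarith

lemma phiF_lip (j : ℕ) (x y : ℝ) : |phiF j x - phiF j y| ≤ j * |x - y| := by
  unfold phiF
  rw [← mul_sub, abs_mul, abs_of_nonneg (Real.sqrt_nonneg _)]
  have h := sin_lip_aux (j * x) (j * y)
  rw [← mul_sub, abs_mul, Nat.abs_cast] at h
  calc _ ≤ 1 * |Real.sin (j * x) - Real.sin (j * y)| :=
        mul_le_mul_of_nonneg_right sqrt_le_one_aux (abs_nonneg _)
    _ ≤ _ := by linarith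

lemma kap_le (n : ℕ) (hn : 0 < n) (x : ℝ) : kap n x ≤ x := by
  have hh : 0 < Real.pi / n := by have := Real.pi_pos; positivity
  have := Int.floor_le (x / (Real.pi / n))
  rw [le_div_iff₀ hh] at this
  unfold kap; linarith

lemma lt_kap (n : ℕ) (hn : 0 < n) (x : ℝ) : x < kap n x + Real.pi / n := by
  have hh : 0 < Real.pi / n := by have := Real.pi_pos; positivity
  have := Int.lt_floor_add_one (x / (Real.pi / n))
  rw [div_lt_iff₀ hh] at this
  unfold kap; linarith

lemma phiIn_form (n : ℕ) (hn : 0 < n) (j : ℕ) (x : ℝ) : ∃ θ : ℝ, 0 ≤ θ ∧ θ ≤ 1 ∧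
    x - kap n x = θ * (Real.pi / n) ∧
    phiIn n j x = (1 - θ) * phiF j (kap n x) + θ * phiF j (kap n x + Real.pi / n) := by
  have hpi := Real.pi_pos
  have hn' : (0:ℝ) < n := by positivity
  have h1 := kap_le n hn x
  have h2 := lt_kap n hn x
  refine ⟨(n : ℝ) / Real.pi * (x - kap n x), ?_, ?_, ?_, ?_⟩
  · have : 0 ≤ x - kap n x := by linarith
    positivity
  · have : (n : ℝ) / Real.pi * (x - kap n x) ≤ (n : ℝ) / Real.pi * (Real.pi / n) := by
      gcongr; linarith
    have e : (n : ℝ) / Real.pi * (Real.pi / n) = 1 := by field_simp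
    linarith
  · field_simp
  · unfold phiIn; ring

lemma phiIn_abs (n : ℕ) (hn : 0 < n) (j : ℕ) (x : ℝ) : |phiIn n j x| ≤ 1 := by
  obtain ⟨θ, h0, h1, -, e⟩ := phiIn_form n hn j x
  have a := abs_le.1 (phiF_abs j (kap n x))
  have b := abs_le.1 (phiF_abs j (kap n x + Real.pi / n))
  rw [e, abs_le]
  constructor <;> nlinarith

lemma phiIn_lip_aux (n : ℕ) (hn : 0 < n) (j : ℕ) (x y : ℝ) (hxy : x ≤ y) :
    |phiIn n j x - phiIn n j y| ≤ j * (y - x) := by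
  have hh : 0 < Real.pi / n := by have := Real.pi_pos; positivity
  obtain ⟨θ, h0, h1, ex, e⟩ := phiIn_form n hn j x
  obtain ⟨η, g0, g1, ey, f⟩ := phiIn_form n hn j y
  have lx := phiF_lip j (kap n x + Real.pi / n) (kap n x)
  have ly := phiF_lip j (kap n y + Real.pi / n) (kap n y)
  rw [add_sub_cancel_left, abs_of_pos hh] at lx ly
  have hm : ⌊x / (Real.pi / n)⌋ ≤ ⌊y / (Real.pi / n)⌋ := Int.floor_le_floor (by gcongr)
  rcases hm.eq_or_lt with h | h
  · have hk : kap n x = kap n y := by unfold kap; rw [h]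
    rw [e, f, hk]
    rw [hk] at ex
    have e1 : (1 - θ) * phiF j (kap n y) + θ * phiF j (kap n y + Real.pi / n)
      - ((1 - η) * phiF j (kap n y) + η * phiF j (kap n y + Real.pi / n))
      = -((η - θ) * (phiF j (kap n y + Real.pi / n) - phiF j (kap n y))) := by ring
    have hd : y - x = (η - θ) * (Real.pi / n) := by linarith
    have hd0 : 0 ≤ η - θ := by
      by_contra hc
      push Not at hc
      nlinarith
    rw [e1, abs_neg, abs_mul, abs_of_nonneg hd0, hd]
    have := mul_le_mul_of_nonneg_left ly hd0
    linarith
  · have hk : kap n x + Real.pi / n ≤ kap n y := by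
      have : (⌊x / (Real.pi / n)⌋ : ℝ) + 1 ≤ ⌊y / (Real.pi / n)⌋ := by exact_mod_cast h
      unfold kap; nlinarith
    have lm := phiF_lip j (kap n x + Real.pi / n) (kap n y)
    rw [abs_of_nonpos (by linarith : kap n x + Real.pi / n - kap n y ≤ 0)] at lm
    have e1 : phiIn n j x - phiIn n j y
      = -((1 - θ) * (phiF j (kap n x + Real.pi / n) - phiF j (kap n x)))
        + (phiF j (kap n x + Real.pi / n) - phiF j (kap n y))
        + -(η * (phiF j (kap n y + Real.pi / n) - phiF j (kap n y))) := by rw [e, f]; ring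
    rw [e1]
    refine (abs_add_three _ _ _).trans ?_
    rw [abs_neg, abs_neg, abs_mul, abs_mul, abs_of_nonneg g0, abs_of_nonneg (by linarith : 0 ≤ 1 - θ)]
    have k1 := mul_le_mul_of_nonneg_left lx (by linarith : 0 ≤ 1 - θ)
    have k2 := mul_le_mul_of_nonneg_left ly g0
    have hd : y - x = (1 - θ) * (Real.pi / n) + (kap n y - (kap n x + Real.pi / n))
      + η * (Real.pi / n) := by linarith
    rw [hd]
    linarith

lemma phiIn_lip (n : ℕ) (hn : 0 < n) (j : ℕ) (x y : ℝ) :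
    (phiIn n j x - phiIn n j y) ^ 2 ≤ j ^ 2 * (x - y) ^ 2 := by
  have : |phiIn n j x - phiIn n j y| ≤ j * |x - y| := by
    rcases le_total x y with h | h
    · rw [abs_sub_comm x y, abs_of_nonneg (by linarith : 0 ≤ y - x)]
      exact phiIn_lip_aux n hn j x y h
    · rw [abs_sub_comm, abs_of_nonneg (by linarith : 0 ≤ x - y)]
      exact phiIn_lip_aux n hn j y x h
  rw [← mul_pow, ← sq_abs, ← sq_abs ((j : ℝ) * _)]
  rw [abs_mul, Nat.abs_cast]
  gcongr

lemma lam_lower (n j : ℕ) (hj : j < n - 1) :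
    ((j : ℝ) + 1) ^ 4 / 16 ≤ lamEig (j + 1) n ^ 2 := by
  have hpi := Real.pi_pos
  have hn : 0 < n := by omega
  have hn' : (0 : ℝ) < n := by positivity
  have hjn : (j : ℝ) + 1 ≤ n := by
    have : j + 1 ≤ n := by omega
    exact_mod_cast this
  have h1 := Real.mul_le_sin (x := ((j + 1 : ℕ) : ℝ) * Real.pi / (2 * n)) (by positivity) (by
    push_cast
    rw [div_le_div_iff₀ (by positivity) (by positivity)]; nlinarith)
  have e : 2 / Real.pi * (((j + 1 : ℕ) : ℝ) * Real.pi / (2 * n)) = ((j : ℝ) + 1) / n := by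
    push_cast; field_simp
  rw [e] at h1
  have h2 : ((j : ℝ) + 1) ^ 2 / 4 ≤ (4 * (n : ℝ) ^ 2 / Real.pi ^ 2) *
      Real.sin (((j + 1 : ℕ) : ℝ) * Real.pi / (2 * n)) ^ 2 := by
    calc ((j : ℝ) + 1) ^ 2 / 4 = (4 * (n : ℝ) ^ 2 / 4 ^ 2) * (((j : ℝ) + 1) / n) ^ 2 := by field_simp
      _ ≤ _ := by
        gcongr
        exact Real.pi_le_four
  unfold lamEig
  calc ((j : ℝ) + 1) ^ 4 / 16 = (((j : ℝ) + 1) ^ 2 / 4) ^ 2 := by ring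
    _ ≤ _ := by
      rw [neg_mul, neg_sq]
      gcongr

lemma int_exp_aux (μ : ℝ) (hμ : 0 < μ) (a s : ℝ) :
    ∫ r in a..s, Real.exp (-(2 * μ) * (s - r)) ≤ 1 / (2 * μ) := by
  have hd : ∀ r ∈ Set.uIcc a s, HasDerivAt (fun r => Real.exp (-(2 * μ) * (s - r)) / (2 * μ))
      (Real.exp (-(2 * μ) * (s - r))) r := by
    intro r _
    have h1 : HasDerivAt (fun r => -(2 * μ) * (s - r)) (2 * μ) r := by
      have := ((hasDerivAt_id r).const_sub s).const_mul (-(2 * μ))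
      simpa using this
    have h2 := h1.exp.div_const (2 * μ)
    rwa [mul_div_cancel_right₀ _ (by positivity)] at h2
  rw [intervalIntegral.integral_eq_sub_of_hasDerivAt hd
    (Continuous.intervalIntegrable (by fun_prop) _ _)]
  simp only [sub_self, mul_zero, Real.exp_zero]
  have : 0 ≤ Real.exp (-(2 * μ) * (s - a)) / (2 * μ) := by positivity
  linarith

lemma term2_aux (μ p s t : ℝ) (hμ : 0 < μ) (hp : |p| ≤ 1) (hst : s < t) :
    ∫ r in s..t, (Real.exp (-μ * (t - r)) * p) ^ 2 ≤ min (t - s) (1 / (2 * μ)) := by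
  have hp2 : p ^ 2 ≤ 1 := by rw [← sq_abs]; exact pow_le_one₀ (abs_nonneg _) hp
  have hb : ∀ r, (Real.exp (-μ * (t - r)) * p) ^ 2 ≤ Real.exp (-(2 * μ) * (t - r)) := by
    intro r
    rw [mul_pow, ← Real.exp_nat_mul]
    have : ((2 : ℕ) : ℝ) * (-μ * (t - r)) = -(2 * μ) * (t - r) := by push_cast; ring
    rw [this]
    have := Real.exp_pos (-(2 * μ) * (t - r))
    nlinarith
  have h1 : ∫ r in s..t, (Real.exp (-μ * (t - r)) * p) ^ 2
      ≤ ∫ r in s..t, Real.exp (-(2 * μ) * (t - r)) :=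
    intervalIntegral.integral_mono_on hst.le (Continuous.intervalIntegrable (by fun_prop) _ _)
      (Continuous.intervalIntegrable (by fun_prop) _ _) fun r _ => hb r
  have h2 : ∫ r in s..t, Real.exp (-(2 * μ) * (t - r)) ≤ ∫ r in s..t, (1:ℝ) :=
    intervalIntegral.integral_mono_on hst.le (Continuous.intervalIntegrable (by fun_prop) _ _)
      (Continuous.intervalIntegrable (by fun_prop) _ _) fun r hr => by
        rw [Real.exp_le_one_iff]
        have := hr.2
        nlinarith [mul_nonneg hμ.le (sub_nonneg.2 hr.2)]
  have h3 : ∫ r in s..t, (1:ℝ) = t - s := by simp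
  exact le_min (by linarith) (h1.trans (int_exp_aux μ hμ s t))

lemma term1_aux (μ p q s t a : ℝ) (hμ : 0 < μ) (hp : |p| ≤ 1) (hs : 0 ≤ s) (hst : s < t)
    (ha0 : 0 < a) (ha1 : a < 1) :
    ∫ r in (0:ℝ)..s, (Real.exp (-μ * (t - r)) * p - Real.exp (-μ * (s - r)) * q) ^ 2
      ≤ (t - s) ^ a * μ ^ (a - 1) + (p - q) ^ 2 / μ := by
  have hp2 : p ^ 2 ≤ 1 := by rw [← sq_abs]; exact pow_le_one₀ (abs_nonneg _) hp
  set w := 1 - Real.exp (-(μ * (t - s))) with hw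
  have hd : 0 < t - s := by linarith
  have hmd : 0 < μ * (t - s) := by positivity
  have hw0 : 0 ≤ w := by
    have : Real.exp (-(μ * (t - s))) ≤ 1 := by rw [Real.exp_le_one_iff]; linarith
    linarith
  have hw1 : w ≤ 1 := by have := Real.exp_pos (-(μ * (t - s))); linarith
  have hwm : w ≤ μ * (t - s) := by
    have := Real.add_one_le_exp (-(μ * (t - s))); linarith
  have hw2 : w ^ 2 ≤ (μ * (t - s)) ^ a := by
    calc w ^ 2 ≤ w := by nlinarith
      _ = w ^ (1:ℝ) := by simp
      _ ≤ w ^ a := by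
        exact Real.rpow_le_rpow_of_exponent_ge_of_imp hw0 hw1 ha1.le (fun _ h => absurd h (by norm_num))
      _ ≤ _ := Real.rpow_le_rpow hw0 hwm ha0.le
  have hb : ∀ r, (Real.exp (-μ * (t - r)) * p - Real.exp (-μ * (s - r)) * q) ^ 2
      ≤ (2 * w ^ 2 + 2 * (p - q) ^ 2) * Real.exp (-(2 * μ) * (s - r)) := by
    intro r
    have e1 : Real.exp (-μ * (t - r)) = Real.exp (-μ * (s - r)) * (1 - w) := by
      rw [hw, sub_sub_cancel, ← Real.exp_add]; ring_nf
    have e2 : Real.exp (-(2 * μ) * (s - r)) = Real.exp (-μ * (s - r)) ^ 2 := by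
      rw [← Real.exp_nat_mul]; push_cast; ring_nf
    rw [e1, e2]
    set E := Real.exp (-μ * (s - r))
    have : (E * (1 - w) * p - E * q) ^ 2 = ((p - q) - w * p) ^ 2 * E ^ 2 := by ring
    rw [this]
    gcongr
    nlinarith [sq_nonneg ((p - q) + w * p), mul_le_mul_of_nonneg_left hp2 (sq_nonneg w)]
  have h1 : ∫ r in (0:ℝ)..s, (Real.exp (-μ * (t - r)) * p - Real.exp (-μ * (s - r)) * q) ^ 2
      ≤ ∫ r in (0:ℝ)..s, (2 * w ^ 2 + 2 * (p - q) ^ 2) * Real.exp (-(2 * μ) * (s - r)) :=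
    intervalIntegral.integral_mono_on hs (Continuous.intervalIntegrable (by fun_prop) _ _)
      (Continuous.intervalIntegrable (by fun_prop) _ _) fun r _ => hb r
  rw [intervalIntegral.integral_const_mul] at h1
  have h2 := mul_le_mul_of_nonneg_left (int_exp_aux μ hμ 0 s)
    (by positivity : 0 ≤ 2 * w ^ 2 + 2 * (p - q) ^ 2)
  refine h1.trans (h2.trans ?_)
  have e : (2 * w ^ 2 + 2 * (p - q) ^ 2) * (1 / (2 * μ)) = w ^ 2 / μ + (p - q) ^ 2 / μ := by
    field_simp
  rw [e]
  have h3 : w ^ 2 / μ ≤ (t - s) ^ a * μ ^ (a - 1) := by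
    rw [Real.rpow_sub_one hμ.ne', div_le_iff₀ hμ]
    rw [Real.mul_rpow hμ.le hd.le] at hw2
    have : (t - s) ^ a * (μ ^ a / μ) * μ = μ ^ a * (t - s) ^ a := by field_simp
    linarith
  linarith

lemma min_aux (ε m : ℝ) (hε : 0 < ε) (hm : 1 ≤ m) :
    min (ε ^ 4) (8 / m ^ 4) ≤ 32 * ε ^ 3 * (1 / (1 + (m - 1) * ε) - 1 / (1 + m * ε)) := by
  have h1 : 0 < 1 + (m - 1) * ε := by
    have := mul_nonneg (sub_nonneg.2 hm) hε.le; linarith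
  have h2 : 0 < 1 + m * ε := by positivity
  have e : 32 * ε ^ 3 * (1 / (1 + (m - 1) * ε) - 1 / (1 + m * ε))
      = 32 * ε ^ 4 / ((1 + (m - 1) * ε) * (1 + m * ε)) := by
    rw [div_sub_div _ _ h1.ne' h2.ne', ← mul_div_assoc]
    congr 1
    ring
  have h3 : 32 * ε ^ 4 / (1 + m * ε) ^ 2 ≤ 32 * ε ^ 4 / ((1 + (m - 1) * ε) * (1 + m * ε)) := by
    gcongr
    nlinarith
  rw [e]
  refine le_trans ?_ h3
  have hv : 0 < m * ε := by positivity
  rcases le_total (m * ε) 1 with h | h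
  · refine (min_le_left _ _).trans ?_
    rw [le_div_iff₀ (by positivity)]
    have : (1 + m * ε) ^ 2 ≤ 32 := by nlinarith
    have h4 : 0 < ε ^ 4 := by positivity
    nlinarith
  · refine (min_le_right _ _).trans ?_
    rw [div_le_div_iff₀ (by positivity) (by positivity)]
    have k1 : (1 + m * ε) ^ 2 ≤ 4 * (m * ε) ^ 2 := by nlinarith
    have k2 : (m * ε) ^ 2 ≤ (m * ε) ^ 4 := pow_le_pow_right₀ h (by norm_num)
    have : 32 * ε ^ 4 * m ^ 4 = 32 * (m * ε) ^ 4 := by ring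
    nlinarith

lemma min_sum_aux (ε : ℝ) (hε : 0 < ε) (N : ℕ) :
    ∑ j ∈ Finset.range N, min (ε ^ 4) (8 / ((j : ℝ) + 1) ^ 4) ≤ 32 * ε ^ 3 := by
  have h : ∀ j ∈ Finset.range N, min (ε ^ 4) (8 / ((j : ℝ) + 1) ^ 4)
      ≤ 32 * ε ^ 3 * (1 / (1 + (j : ℝ) * ε) - 1 / (1 + ((j + 1 : ℕ) : ℝ) * ε)) := by
    intro j _
    have := min_aux ε ((j : ℝ) + 1) hε (by have : (0:ℝ) ≤ j := by positivity
                                           linarith)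
    simpa using this
  refine (Finset.sum_le_sum h).trans ?_
  rw [← Finset.mul_sum, Finset.sum_range_sub' (fun j : ℕ => 1 / (1 + (j : ℝ) * ε))]
  have : 0 ≤ 1 / (1 + (N : ℝ) * ε) := by positivity
  have h3 : 0 < 32 * ε ^ 3 := by positivity
  simp only [Nat.cast_zero, zero_mul, add_zero, div_one]
  nlinarith

/-- For every `α ∈ (0,1)` and `T > 0` there is `C = C(α,T) > 0`, independent of `n`, such
that for all `n ≥ 2`, `x, y ∈ (0,π)`, `0 ≤ s < t ≤ T`:
`∫₀ˢ∫₀^π |G^n_{t-r}(x,z) - G^n_{s-r}(y,z)|² dz dr ≤ C(|x-y|² + (t-s)^{3α/4})` and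
`∫ₛᵗ∫₀^π |G^n_{t-r}(x,z)|² dz dr ≤ C(t-s)^{3/4}`. -/
theorem stmt14 (α T : ℝ) (hα : α ∈ Set.Ioo (0 : ℝ) 1) (hT : 0 < T) :
    ∃ C : ℝ, 0 < C ∧ ∀ n : ℕ, 2 ≤ n →
      ∀ x ∈ Set.Ioo 0 Real.pi, ∀ y ∈ Set.Ioo 0 Real.pi, ∀ s t : ℝ, 0 ≤ s → s < t → t ≤ T →
        ((∫ r in (0:ℝ)..s, ∫ z in (0:ℝ)..Real.pi, (Gn n (t - r) x z - Gn n (s - r) y z) ^ 2)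
            ≤ C * ((x - y) ^ 2 + (t - s) ^ (3 * α / 4)))
        ∧ ((∫ r in s..t, ∫ z in (0:ℝ)..Real.pi, (Gn n (t - r) x z) ^ 2)
            ≤ C * (t - s) ^ ((3 : ℝ) / 4)) := by
  obtain ⟨hα0, hα1⟩ := hα
  set a : ℝ := 3 * α / 4 with ha
  have ha0 : 0 < a := by rw [ha]; linarith
  have ha1 : a < 3 / 4 := by rw [ha]; linarith
  have hS : ∀ p : ℝ, p < -1 → Summable (fun j : ℕ => ((j : ℝ) + 1) ^ p) := by
    intro p hp
    have := (summable_nat_add_iff 1).2 (Real.summable_nat_rpow.2 hp)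
    simpa using this
  have hS1 := hS (4 * (a - 1)) (by linarith)
  have hS2 := hS (-2) (by norm_num)
  set A := ∑' j : ℕ, ((j : ℝ) + 1) ^ (4 * (a - 1)) with hA
  set B := ∑' j : ℕ, ((j : ℝ) + 1) ^ (-2 : ℝ) with hB
  have hA0 : 0 ≤ A := tsum_nonneg fun j => by positivity
  have hB0 : 0 ≤ B := tsum_nonneg fun j => by positivity
  refine ⟨16 * A + 16 * B + 32, by positivity, ?_⟩
  intro n hn x _ y _ s t hs hst _
  have hn0 : 0 < n := by omega
  have hd : 0 < t - s := by linarith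
  have hμ : ∀ j ∈ Finset.range (n - 1), 0 < lamEig (j + 1) n ^ 2 := fun j hj =>
    lt_of_lt_of_le (by positivity) (lam_lower n j (Finset.mem_range.1 hj))
  constructor
  · have e : ∀ r, ∫ z in (0:ℝ)..Real.pi, (Gn n (t - r) x z - Gn n (s - r) y z) ^ 2
        = ∑ j ∈ Finset.range (n - 1), (Real.exp (-(lamEig (j + 1) n ^ 2) * (t - r)) * phiIn n (j + 1) x
          - Real.exp (-(lamEig (j + 1) n ^ 2) * (s - r)) * phiIn n (j + 1) y) ^ 2 := by
      intro r
      rw [← parseval_aux n hn]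
      simp only [Gn, ← Finset.sum_sub_distrib, sub_mul]
    simp_rw [e]
    rw [intervalIntegral.integral_finsetSum
      (fun j _ => Continuous.intervalIntegrable (by fun_prop) _ _)]
    have hb : ∀ j ∈ Finset.range (n - 1),
        (∫ r in (0:ℝ)..s, (Real.exp (-(lamEig (j + 1) n ^ 2) * (t - r)) * phiIn n (j + 1) x
          - Real.exp (-(lamEig (j + 1) n ^ 2) * (s - r)) * phiIn n (j + 1) y) ^ 2)
        ≤ 16 * (t - s) ^ a * ((j : ℝ) + 1) ^ (4 * (a - 1))
          + 16 * (x - y) ^ 2 * ((j : ℝ) + 1) ^ (-2 : ℝ) := by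
      intro j hj
      have hl := lam_lower n j (Finset.mem_range.1 hj)
      have hm : (0:ℝ) < (j : ℝ) + 1 := by positivity
      refine (term1_aux _ _ _ s t a (hμ j hj) (phiIn_abs n hn0 _ _) hs hst ha0 (by linarith)).trans ?_
      have h1 : (lamEig (j + 1) n ^ 2) ^ (a - 1) ≤ 16 * ((j : ℝ) + 1) ^ (4 * (a - 1)) := by
        calc (lamEig (j + 1) n ^ 2) ^ (a - 1) ≤ (((j : ℝ) + 1) ^ 4 / 16) ^ (a - 1) :=
              Real.rpow_le_rpow_of_nonpos (by positivity) hl (by linarith)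
          _ = (16 : ℝ) ^ (1 - a) * ((j : ℝ) + 1) ^ (4 * (a - 1)) := by
              rw [Real.div_rpow (by positivity) (by norm_num), Real.rpow_mul hm.le,
                show (1 - a) = -(a - 1) by ring, Real.rpow_neg (by norm_num)]
              rw [show ((j : ℝ) + 1) ^ (4 : ℝ) = ((j : ℝ) + 1) ^ (4 : ℕ) by
                exact_mod_cast Real.rpow_natCast ((j : ℝ) + 1) 4]
              field_simp
          _ ≤ 16 * ((j : ℝ) + 1) ^ (4 * (a - 1)) := by
              gcongr
              calc (16:ℝ) ^ (1 - a) ≤ (16:ℝ) ^ (1:ℝ) :=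
                    Real.rpow_le_rpow_of_exponent_le (by norm_num) (by linarith)
                _ = 16 := by simp
      have h2 : (phiIn n (j + 1) x - phiIn n (j + 1) y) ^ 2 / lamEig (j + 1) n ^ 2
          ≤ 16 * (x - y) ^ 2 * ((j : ℝ) + 1) ^ (-2 : ℝ) := by
        have h3 := phiIn_lip n hn0 (j + 1) x y
        push_cast at h3
        have e2 : ((j : ℝ) + 1) ^ (-2 : ℝ) = (((j : ℝ) + 1) ^ 2)⁻¹ := by
          rw [Real.rpow_neg hm.le]
          congr 1
          exact_mod_cast Real.rpow_natCast ((j : ℝ) + 1) 2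
        rw [e2]
        calc _ ≤ (((j : ℝ) + 1) ^ 2 * (x - y) ^ 2) / (((j : ℝ) + 1) ^ 4 / 16) := by gcongr
          _ = _ := by field_simp
      have h4 : 0 < (t - s) ^ a := by positivity
      have := mul_le_mul_of_nonneg_left h1 h4.le
      linarith
    refine (Finset.sum_le_sum hb).trans ?_
    rw [Finset.sum_add_distrib, ← Finset.mul_sum, ← Finset.mul_sum]
    have k1 : ∑ j ∈ Finset.range (n - 1), ((j : ℝ) + 1) ^ (4 * (a - 1)) ≤ A :=
      hS1.sum_le_tsum _ (fun j _ => by positivity)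
    have k2 : ∑ j ∈ Finset.range (n - 1), ((j : ℝ) + 1) ^ (-2 : ℝ) ≤ B :=
      hS2.sum_le_tsum _ (fun j _ => by positivity)
    have h4 : 0 < (t - s) ^ a := by positivity
    have h5 := sq_nonneg (x - y)
    have k3 := mul_le_mul_of_nonneg_left k1 (by positivity : 0 ≤ 16 * (t - s) ^ a)
    have k4 := mul_le_mul_of_nonneg_left k2 (by positivity : 0 ≤ 16 * (x - y) ^ 2)
    have k5 : 0 ≤ A * (x - y) ^ 2 := by positivity
    have k6 : 0 ≤ B * (t - s) ^ a := by positivity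
    linarith
  · have e : ∀ r, ∫ z in (0:ℝ)..Real.pi, (Gn n (t - r) x z) ^ 2
        = ∑ j ∈ Finset.range (n - 1),
          (Real.exp (-(lamEig (j + 1) n ^ 2) * (t - r)) * phiIn n (j + 1) x) ^ 2 := by
      intro r
      rw [← parseval_aux n hn]
      simp only [Gn]
    simp_rw [e]
    rw [intervalIntegral.integral_finsetSum
      (fun j _ => Continuous.intervalIntegrable (by fun_prop) _ _)]
    set ε : ℝ := (t - s) ^ ((1 : ℝ) / 4) with hε
    have hε0 : 0 < ε := by positivity
    have e4 : ε ^ 4 = t - s := by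
      rw [hε, ← Real.rpow_natCast, ← Real.rpow_mul hd.le]; norm_num
    have e3 : ε ^ 3 = (t - s) ^ ((3 : ℝ) / 4) := by
      rw [hε, ← Real.rpow_natCast, ← Real.rpow_mul hd.le]; norm_num
    have hb : ∀ j ∈ Finset.range (n - 1),
        (∫ r in s..t, (Real.exp (-(lamEig (j + 1) n ^ 2) * (t - r)) * phiIn n (j + 1) x) ^ 2)
        ≤ min (ε ^ 4) (8 / ((j : ℝ) + 1) ^ 4) := by
      intro j hj
      refine (term2_aux _ _ s t (hμ j hj) (phiIn_abs n hn0 _ _) hst).trans ?_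
      rw [e4]
      refine min_le_min le_rfl ?_
      have hl := lam_lower n j (Finset.mem_range.1 hj)
      rw [div_le_div_iff₀ (by have := hμ j hj; positivity) (by positivity)]
      linarith
    refine (Finset.sum_le_sum hb).trans ((min_sum_aux ε hε0 _).trans ?_)
    rw [e3]
    have : 0 < (t - s) ^ ((3 : ℝ) / 4) := by positivity
    gcongr
    linarith
end
end

section
/- For every T > 0 there exists a constant C = C(T) > 0, independent of n, such that for all integers n ≥ 2 and all (t,x) ∈ (0,T] × (0,π): ∫₀ᵗ ∫₀^π |Δ_nG^n_s(x,y) - ΔG_s(x,y)| dy ds ≤ C n^{-1}, and ∫₀ᵗ ∫₀^π |G^n_s(x,y) - G_s(x,y)|² dy ds ≤ C n^{-2}. -/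
noncomputable section

open Real intervalIntegral

theorem aux_int_cos (m : ℤ) (hm : m ≠ 0) : ∫ y in (0:ℝ)..π, Real.cos (m * y) = 0 := by
  have hm' : (m:ℝ) ≠ 0 := by exact_mod_cast hm
  rw [intervalIntegral.integral_comp_mul_left (fun y => Real.cos y) hm', integral_cos]
  simp [Real.sin_int_mul_pi]

theorem aux_sin_sin (j k : ℕ) :
    ∫ y in (0:ℝ)..π, Real.sin (((j:ℝ)+1) * y) * Real.sin (((k:ℝ)+1) * y)
      = if j = k then π / 2 else 0 := by
  have h1 : ∀ y : ℝ, Real.sin (((j:ℝ)+1) * y) * Real.sin (((k:ℝ)+1) * y)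
      = (Real.cos (((j - k : ℤ) : ℝ) * y) - Real.cos (((j + k + 2 : ℤ) : ℝ) * y)) / 2 := by
    intro y
    have e1 : ((j - k : ℤ) : ℝ) * y = ((j:ℝ)+1) * y - ((k:ℝ)+1) * y := by push_cast; ring
    have e2 : ((j + k + 2 : ℤ) : ℝ) * y = ((j:ℝ)+1) * y + ((k:ℝ)+1) * y := by push_cast; ring
    rw [e1, e2, Real.cos_sub, Real.cos_add]; ring
  simp_rw [h1]
  rw [intervalIntegral.integral_div, intervalIntegral.integral_sub
    (Continuous.intervalIntegrable (by fun_prop) _ _)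
    (Continuous.intervalIntegrable (by fun_prop) _ _), aux_int_cos (j + k + 2) (by omega)]
  split_ifs with h
  · subst h; simp
  · rw [aux_int_cos _ (by omega)]; simp

theorem aux_cos_cos (j k : ℕ) :
    ∫ y in (0:ℝ)..π, Real.cos (((j:ℝ)+1) * y) * Real.cos (((k:ℝ)+1) * y)
      = if j = k then π / 2 else 0 := by
  have h1 : ∀ y : ℝ, Real.cos (((j:ℝ)+1) * y) * Real.cos (((k:ℝ)+1) * y)
      = (Real.cos (((j - k : ℤ) : ℝ) * y) + Real.cos (((j + k + 2 : ℤ) : ℝ) * y)) / 2 := by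
    intro y
    have e1 : ((j - k : ℤ) : ℝ) * y = ((j:ℝ)+1) * y - ((k:ℝ)+1) * y := by push_cast; ring
    have e2 : ((j + k + 2 : ℤ) : ℝ) * y = ((j:ℝ)+1) * y + ((k:ℝ)+1) * y := by push_cast; ring
    rw [e1, e2, Real.cos_sub, Real.cos_add]; ring
  simp_rw [h1]
  rw [intervalIntegral.integral_div, intervalIntegral.integral_add
    (Continuous.intervalIntegrable (by fun_prop) _ _)
    (Continuous.intervalIntegrable (by fun_prop) _ _), aux_int_cos (j + k + 2) (by omega)]
  split_ifs with h
  · subst h; simp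
  · rw [aux_int_cos _ (by omega)]; simp

/-- abstract Parseval for finite sums -/
theorem aux_parseval (e : ℕ → ℝ → ℝ) (he : ∀ j, Continuous (e j))
    (ho : ∀ j k, ∫ y in (0:ℝ)..π, e j y * e k y = if j = k then π / 2 else 0)
    (c : ℕ → ℝ) (N : ℕ) :
    ∫ y in (0:ℝ)..π, (∑ j ∈ Finset.range N, c j * e j y) ^ 2
      = π / 2 * ∑ j ∈ Finset.range N, c j ^ 2 := by
  have h1 : ∀ y : ℝ, (∑ j ∈ Finset.range N, c j * e j y) ^ 2
      = ∑ j ∈ Finset.range N, ∑ k ∈ Finset.range N, (c j * c k) * (e j y * e k y) := by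
    intro y
    rw [sq, Finset.sum_mul_sum]
    refine Finset.sum_congr rfl fun j _ => Finset.sum_congr rfl fun k _ => by ring
  simp_rw [h1]
  rw [intervalIntegral.integral_finsetSum]
  · rw [Finset.mul_sum]
    refine Finset.sum_congr rfl fun j hj => ?_
    rw [intervalIntegral.integral_finsetSum]
    · simp_rw [intervalIntegral.integral_const_mul, ho]
      simp [Finset.mem_range.mp hj]
      ring
    · intro k _
      exact Continuous.intervalIntegrable (by have := he j; have := he k; fun_prop) _ _
  · intro j _
    exact Continuous.intervalIntegrable (by fun_prop) _ _

theorem aux_phi_eq (j : ℕ) (y : ℝ) : phiF (j+1) y = √(2/π) * Real.sin (((j:ℝ)+1) * y) := by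
  simp [phiF]

theorem aux_sq : √(2/π) ^ 2 = 2 / π := Real.sq_sqrt (by positivity)

theorem aux_phi_cont (j : ℕ) : Continuous (phiF j) := by
  unfold phiF; fun_prop

theorem aux_phi_parseval (c : ℕ → ℝ) (N : ℕ) :
    ∫ y in (0:ℝ)..π, (∑ j ∈ Finset.range N, c j * phiF (j+1) y) ^ 2
      = ∑ j ∈ Finset.range N, c j ^ 2 := by
  have := aux_parseval (fun j y => Real.sin (((j:ℝ)+1) * y)) (fun j => by fun_prop) aux_sin_sin
    (fun j => c j * √(2/π)) N
  simp only [aux_phi_eq, mul_pow, aux_sq, ← mul_assoc] at this ⊢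
  rw [this, ← Finset.sum_mul]
  field_simp

theorem aux_dphi_parseval (c : ℕ → ℝ) (N : ℕ) :
    ∫ y in (0:ℝ)..π, (∑ j ∈ Finset.range N, c j * (√(2/π) * ((j:ℝ)+1) * Real.cos (((j:ℝ)+1) * y))) ^ 2
      = ∑ j ∈ Finset.range N, (((j:ℝ)+1) * c j) ^ 2 := by
  have := aux_parseval (fun j y => Real.cos (((j:ℝ)+1) * y)) (fun j => by fun_prop) aux_cos_cos
    (fun j => (((j:ℝ)+1) * c j) * √(2/π)) N
  have h2 : ∀ (j : ℕ) (y : ℝ), c j * (√(2/π) * ((j:ℝ)+1) * Real.cos (((j:ℝ)+1) * y))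
     = (((j:ℝ)+1) * c j) * √(2/π) * Real.cos (((j:ℝ)+1) * y) := by intros; ring
  simp_rw [h2]
  rw [this]
  simp_rw [mul_pow, aux_sq]
  rw [← Finset.sum_mul]
  field_simp

theorem aux_cs (g : ℝ → ℝ) (hg : Continuous g) (a b : ℝ) (hab : a ≤ b) :
    (∫ y in a..b, g y) ^ 2 ≤ (b - a) * ∫ y in a..b, g y ^ 2 := by
  rcases eq_or_lt_of_le hab with rfl | h
  · simp
  set w := ∫ y in a..b, g y with hw
  have h0 : 0 ≤ ∫ y in a..b, ((b - a) * g y - w) ^ 2 :=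
    intervalIntegral.integral_nonneg hab fun _ _ => sq_nonneg _
  have h1 : ∫ y in a..b, ((b - a) * g y - w) ^ 2
      = (b-a)^2 * (∫ y in a..b, g y ^ 2) - (2 * (b-a) * w) * w + (b - a) * w^2 := by
    have : ∀ y, ((b - a) * g y - w) ^ 2 = (b-a)^2 * g y ^ 2 - (2 * (b-a) * w) * g y + w^2 := by
      intro y; ring
    simp_rw [this]
    rw [intervalIntegral.integral_add, intervalIntegral.integral_sub,
      intervalIntegral.integral_const_mul, intervalIntegral.integral_const_mul,
      intervalIntegral.integral_const, ← hw, smul_eq_mul]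
    all_goals exact Continuous.intervalIntegrable (by fun_prop) _ _
  rw [h1] at h0
  have h2 : 0 ≤ (b-a) * ((b-a) * (∫ y in a..b, g y ^ 2) - w^2) := by nlinarith
  have h3 := nonneg_of_mul_nonneg_right h2 (by linarith : 0 < b - a)
  linarith

theorem aux_kap_eq (n i : ℕ) (hn : 2 ≤ n) (y : ℝ) (h1 : i * (π / n) ≤ y)
    (h2 : y < (i + 1 : ℕ) * (π / n)) : kap n y = i * (π / n) := by
  have hn0 : (0:ℝ) < n := by positivity
  have hh : 0 < π / n := by positivity
  have : ⌊y / (π / n)⌋ = (i : ℤ) := by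
    rw [Int.floor_eq_iff]
    constructor
    · rw [le_div_iff₀ hh]; exact_mod_cast h1
    · rw [div_lt_iff₀ hh]; exact_mod_cast h2
  unfold kap
  rw [this]; push_cast; ring

theorem aux_kap_meas (n : ℕ) : Measurable (kap n) := by
  unfold kap
  have : Measurable (fun y : ℝ => (⌊y / (π / n)⌋ : ℝ)) := by
    have h := (measurable_from_top (f := fun z : ℤ => (z:ℝ))).comp
      (Int.measurable_floor.comp (measurable_id.div_const (π / n)))
    exact h
  exact measurable_const.mul this

theorem aux_step (n : ℕ) (hn : 2 ≤ n) (f g : ℝ → ℝ) (hg : Continuous g)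
    (hfg : ∀ y, HasDerivAt f (g y) y) :
    IntervalIntegrable (fun y => (f (kap n y) - f y) ^ 2) MeasureTheory.volume 0 π ∧
    ∫ y in (0:ℝ)..π, (f (kap n y) - f y) ^ 2 ≤ (π / n) ^ 2 * ∫ y in (0:ℝ)..π, g y ^ 2 := by
  have hn0 : (0:ℝ) < n := by positivity
  set h := π / n with hh
  have hpos : 0 < h := by positivity
  have hf : Continuous f := continuous_iff_continuousAt.2 fun y => (hfg y).continuousAt
  have hend : ((n:ℕ):ℝ) * h = π := by rw [hh]; field_simp
  have hcong : ∀ i : ℕ, Set.EqOn (fun y => (f (i * h) - f y) ^ 2) (fun y => (f (kap n y) - f y) ^ 2)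
      (Set.Ioo (i * h) ((i+1:ℕ) * h)) := by
    intro i y hy
    simp only
    rw [aux_kap_eq n i hn y hy.1.le hy.2]
  have hle : ∀ i : ℕ, (i:ℝ) * h ≤ ((i+1:ℕ):ℝ) * h := by
    intro i; push_cast; nlinarith
  have hint : ∀ i : ℕ, IntervalIntegrable (fun y => (f (kap n y) - f y) ^ 2) MeasureTheory.volume
      (i * h) ((i+1:ℕ) * h) := by
    intro i
    refine IntervalIntegrable.congr_uIoo (f := fun y => (f (i * h) - f y) ^ 2) ?_ ?_
    · exact Continuous.intervalIntegrable (by fun_prop) _ _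
    · rw [Set.uIoo_of_le (hle i)]; exact hcong i
  have hcell : ∀ i : ℕ, ∫ y in (i * h)..((i+1:ℕ) * h), (f (kap n y) - f y) ^ 2
      ≤ h ^ 2 * ∫ y in (i * h)..((i+1:ℕ) * h), g y ^ 2 := by
    intro i
    have e : ∫ y in (i * h)..((i+1:ℕ) * h), (f (kap n y) - f y) ^ 2
        = ∫ y in (i * h)..((i+1:ℕ) * h), (f (i * h) - f y) ^ 2 := by
      refine intervalIntegral.integral_congr_uIoo ?_
      rw [Set.uIoo_of_le (hle i)]; exact (hcong i).symm
    rw [e]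
    have : ∫ y in (i * h)..((i+1:ℕ) * h), (f (i * h) - f y) ^ 2 ≤
        ∫ y in (i * h)..((i+1:ℕ) * h), (h * ∫ y in (i * h)..((i+1:ℕ) * h), g y ^ 2) := by
      refine intervalIntegral.integral_mono_on (hle i)
        (Continuous.intervalIntegrable (by fun_prop) _ _) (by simp) ?_
      intro y hy
      have hftc : ∫ z in (i * h)..y, g z = f y - f (i * h) :=
        intervalIntegral.integral_eq_sub_of_hasDerivAt (fun z _ => hfg z)
          (hg.intervalIntegrable _ _)
      have hcs := aux_cs g hg _ _ hy.1
      rw [hftc] at hcs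
      have hnn : ∀ a b, a ≤ b → 0 ≤ ∫ z in a..b, g z ^ 2 := fun a b hab =>
        intervalIntegral.integral_nonneg hab fun _ _ => sq_nonneg _
      have hmono : ∫ z in (i * h)..y, g z ^ 2 ≤ ∫ z in (i * h)..((i+1:ℕ) * h), g z ^ 2 := by
        have := intervalIntegral.integral_add_adjacent_intervals (f := fun z => g z ^ 2)
          (a := i * h) (b := y) (c := (i+1:ℕ) * h) (μ := MeasureTheory.volume)
          (Continuous.intervalIntegrable (by fun_prop) _ _)
          (Continuous.intervalIntegrable (by fun_prop) _ _)
        linarith [hnn _ _ hy.2]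
      have hyle : y - i * h ≤ h := by have := hy.2; push_cast at this; linarith
      calc (f (i * h) - f y) ^ 2 = (f y - f (i * h)) ^ 2 := by ring
        _ ≤ _ := hcs
        _ ≤ _ := mul_le_mul hyle hmono (hnn _ _ hy.1) hpos.le
    refine this.trans (le_of_eq ?_)
    rw [intervalIntegral.integral_const, smul_eq_mul]
    push_cast; ring
  have hi := IntervalIntegrable.trans_iterate (a := fun i : ℕ => (i:ℝ) * h) (n := n)
    (f := fun y => (f (kap n y) - f y) ^ 2) (μ := MeasureTheory.volume) (fun i _ => hint i)
  have hs1 := intervalIntegral.sum_integral_adjacent_intervals (a := fun i : ℕ => (i:ℝ) * h) (n := n)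
    (f := fun y => (f (kap n y) - f y) ^ 2) (μ := MeasureTheory.volume) (fun i _ => hint i)
  have hs2 := intervalIntegral.sum_integral_adjacent_intervals (a := fun i : ℕ => (i:ℝ) * h) (n := n)
    (f := fun y => g y ^ 2) (μ := MeasureTheory.volume)
    (fun i _ => Continuous.intervalIntegrable (by fun_prop) _ _)
  simp only [hend, Nat.cast_zero, zero_mul] at hi hs1 hs2
  refine ⟨hi, ?_⟩
  rw [← hs1, ← hs2, Finset.mul_sum]
  exact Finset.sum_le_sum fun i _ => hcell i

theorem aux_sqrt_le : √(2/π) ≤ 1 := by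
  rw [Real.sqrt_le_iff, one_pow, div_le_one Real.pi_pos]; exact ⟨zero_le_one, Real.two_le_pi⟩

theorem aux_phi_le (j : ℕ) (y : ℝ) : |phiF j y| ≤ 1 := by
  unfold phiF
  rw [abs_mul, abs_of_nonneg (Real.sqrt_nonneg _)]
  exact mul_le_one₀ aux_sqrt_le (abs_nonneg _) (Real.abs_sin_le_one _)

theorem aux_fin (n N : ℕ) (hn : 2 ≤ n) (hN : n - 1 ≤ N) (a b : ℕ → ℝ) :
    ∫ y in (0:ℝ)..π, (∑ j ∈ Finset.range (n-1), b j * phiF (j+1) (kap n y)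
        - ∑ j ∈ Finset.range N, a j * phiF (j+1) y) ^ 2
      ≤ 2 * ((π / n) ^ 2 * ∑ j ∈ Finset.range (n-1), (((j:ℝ)+1) * b j) ^ 2)
        + 2 * ∑ j ∈ Finset.range N, ((if j < n - 1 then b j else 0) - a j) ^ 2 := by
  set f : ℝ → ℝ := fun y => ∑ j ∈ Finset.range (n-1), b j * phiF (j+1) y with hfdef
  set g : ℝ → ℝ := fun y => ∑ j ∈ Finset.range (n-1),
    b j * (√(2/π) * ((j:ℝ)+1) * Real.cos (((j:ℝ)+1) * y)) with hgdef
  set d : ℕ → ℝ := fun j => (if j < n - 1 then b j else 0) - a j with hd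
  have hg : Continuous g := by rw [hgdef]; fun_prop
  have hfg : ∀ y, HasDerivAt f (g y) y := by
    intro y
    refine HasDerivAt.fun_sum fun j _ => ?_
    refine HasDerivAt.const_mul _ ?_
    have h1 : HasDerivAt (fun y : ℝ => Real.sin (((j:ℝ)+1) * y))
        (Real.cos (((j:ℝ)+1) * y) * (((j:ℝ)+1) * 1)) y :=
      ((hasDerivAt_id y).const_mul _).sin
    have h2 := h1.const_mul (√(2/π))
    have h3 : phiF (j+1) = fun y => √(2/π) * Real.sin (((j:ℝ)+1) * y) := by
      funext y; exact aux_phi_eq j y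
    rw [h3]
    convert h2 using 1
    ring
  obtain ⟨hi, hb⟩ := aux_step n hn f g hg hfg
  rw [aux_dphi_parseval] at hb
  have hdc : Continuous (fun y => ∑ j ∈ Finset.range N, d j * phiF (j+1) y) := by
    refine continuous_finsetSum _ fun j _ => (aux_phi_cont _).const_mul _
  have hsplit : ∀ y, f (kap n y) - ∑ j ∈ Finset.range N, a j * phiF (j+1) y
      = (f (kap n y) - f y) + ∑ j ∈ Finset.range N, d j * phiF (j+1) y := by
    intro y
    have : f y = ∑ j ∈ Finset.range N, (if j < n - 1 then b j else 0) * phiF (j+1) y := by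
      simp only [ite_mul, zero_mul]
      rw [← Finset.sum_filter, hfdef]
      refine Finset.sum_congr ?_ fun _ _ => rfl
      ext j; simp; omega
    simp only [hd, sub_mul, Finset.sum_sub_distrib, ← this]
    ring
  have hint2 : IntervalIntegrable (fun y => (∑ j ∈ Finset.range N, d j * phiF (j+1) y) ^ 2)
      MeasureTheory.volume 0 π := (hdc.pow 2).intervalIntegrable _ _
  have hR : IntervalIntegrable (fun y => 2 * (f (kap n y) - f y) ^ 2
      + 2 * (∑ j ∈ Finset.range N, d j * phiF (j+1) y) ^ 2) MeasureTheory.volume 0 π :=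
    (hi.const_mul 2).add (hint2.const_mul 2)
  have hmain : ∫ y in (0:ℝ)..π, (f (kap n y) - ∑ j ∈ Finset.range N, a j * phiF (j+1) y) ^ 2
      ≤ ∫ y in (0:ℝ)..π, (2 * (f (kap n y) - f y) ^ 2
      + 2 * (∑ j ∈ Finset.range N, d j * phiF (j+1) y) ^ 2) := by
    have hpt : ∀ y, (f (kap n y) - ∑ j ∈ Finset.range N, a j * phiF (j+1) y) ^ 2 ≤
        2 * (f (kap n y) - f y) ^ 2 + 2 * (∑ j ∈ Finset.range N, d j * phiF (j+1) y) ^ 2 := by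
      intro y
      rw [hsplit y]
      nlinarith [sq_nonneg ((f (kap n y) - f y) - ∑ j ∈ Finset.range N, d j * phiF (j+1) y)]
    rw [intervalIntegral.integral_of_le Real.pi_pos.le, intervalIntegral.integral_of_le Real.pi_pos.le]
    refine MeasureTheory.integral_mono_of_nonneg (Filter.Eventually.of_forall fun y => sq_nonneg _)
      hR.1 (Filter.Eventually.of_forall hpt)
  refine hmain.trans ?_
  rw [intervalIntegral.integral_add (hi.const_mul 2) (hint2.const_mul 2),
    intervalIntegral.integral_const_mul, intervalIntegral.integral_const_mul, aux_phi_parseval]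
  linarith

theorem aux_summ : Summable (fun j : ℕ => ((j:ℝ)+1) ^ (-(3/2):ℝ)) := by
  have := (summable_nat_add_iff 1).2 (Real.summable_nat_rpow.2 (by norm_num : (-(3/2):ℝ) < -1))
  simpa using this

theorem aux_abs (n : ℕ) (hn : 2 ≤ n) (a b : ℕ → ℝ) (K : ℝ) (hK : 0 ≤ K)
    (ha : Summable fun j => |a j|)
    (h1 : ∀ j < n - 1, (((j:ℝ)+1) * b j) ^ 2 ≤ K * ((j:ℝ)+1) ^ (-(3/2):ℝ))
    (h2 : ∀ j < n - 1, (b j - a j) ^ 2 ≤ K * ((n:ℝ) ^ 2)⁻¹ * ((j:ℝ)+1) ^ (-(3/2):ℝ))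
    (h3 : ∀ j, n - 1 ≤ j → (a j) ^ 2 ≤ K * ((n:ℝ) ^ 2)⁻¹ * ((j:ℝ)+1) ^ (-(3/2):ℝ)) :
    IntervalIntegrable (fun y => (∑ j ∈ Finset.range (n-1), b j * phiF (j+1) (kap n y)
        - ∑' j, a j * phiF (j+1) y) ^ 2) MeasureTheory.volume 0 π ∧
    ∫ y in (0:ℝ)..π, (∑ j ∈ Finset.range (n-1), b j * phiF (j+1) (kap n y)
        - ∑' j, a j * phiF (j+1) y) ^ 2
      ≤ (2 * (π ^ 2 + 1) * ∑' j : ℕ, ((j:ℝ)+1) ^ (-(3/2):ℝ)) * K * ((n:ℝ) ^ 2)⁻¹ := by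
  have hn0 : (0:ℝ) < n := by positivity
  set S := ∑' j : ℕ, ((j:ℝ)+1) ^ (-(3/2):ℝ) with hS
  have hSle : ∀ N, ∑ j ∈ Finset.range N, ((j:ℝ)+1) ^ (-(3/2):ℝ) ≤ S := fun N =>
    aux_summ.sum_le_tsum _ fun j _ => by positivity
  set P : ℝ → ℝ := fun y => ∑ j ∈ Finset.range (n-1), b j * phiF (j+1) (kap n y) with hP
  have hPm : Measurable P := by
    rw [hP]
    refine Finset.measurable_fun_sum _ fun j _ => ?_
    exact ((aux_phi_cont _).measurable.comp (aux_kap_meas n)).const_mul _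
  set B := ∑ j ∈ Finset.range (n-1), |b j| with hB
  set A := ∑' j, |a j| with hA
  have hterm : ∀ (c : ℕ → ℝ) j z, ‖c j * phiF (j+1) z‖ ≤ |c j| := by
    intro c j z
    rw [Real.norm_eq_abs, abs_mul]
    exact mul_le_of_le_one_right (abs_nonneg _) (aux_phi_le _ _)
  have hPb : ∀ y, |P y| ≤ B := by
    intro y
    refine (Finset.abs_sum_le_sum_abs _ _).trans (Finset.sum_le_sum fun j _ => ?_)
    exact hterm b j _
  have hsum : ∀ y, Summable fun j => a j * phiF (j+1) y := fun y =>
    Summable.of_norm_bounded ha fun j => hterm a j y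
  have hQc : Continuous fun y => ∑' j, a j * phiF (j+1) y :=
    continuous_tsum (fun j => (aux_phi_cont _).const_mul _) ha fun j y => hterm a j y
  have hQb : ∀ y, |∑' j, a j * phiF (j+1) y| ≤ A := fun y =>
    tsum_of_norm_bounded ha.hasSum fun j => hterm a j y
  have hQNb : ∀ N y, |∑ j ∈ Finset.range N, a j * phiF (j+1) y| ≤ A := by
    intro N y
    refine (Finset.abs_sum_le_sum_abs _ _).trans ?_
    refine (Finset.sum_le_sum fun j _ => hterm a j y).trans ?_
    exact ha.sum_le_tsum _ fun j _ => abs_nonneg _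
  have hdb : ∀ p q : ℝ, |p| ≤ B → |q| ≤ A → ‖(p - q) ^ 2‖ ≤ (B + A) ^ 2 := by
    intro p q hp hq
    rw [Real.norm_eq_abs, abs_pow]
    exact pow_le_pow_left₀ (abs_nonneg _) ((abs_sub _ _).trans (add_le_add hp hq)) 2
  constructor
  · rw [intervalIntegrable_iff_integrableOn_Ioc_of_le Real.pi_pos.le]
    refine MeasureTheory.Measure.integrableOn_of_bounded (M := (B + A)^2) (by simp) ?_ ?_
    · exact ((hPm.sub hQc.measurable).pow_const 2).aestronglyMeasurable
    · exact Filter.Eventually.of_forall fun y => hdb _ _ (hPb y) (hQb y)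
  · have hlim : Filter.Tendsto (fun N => ∫ y in (0:ℝ)..π,
        (P y - ∑ j ∈ Finset.range N, a j * phiF (j+1) y) ^ 2) Filter.atTop
        (nhds (∫ y in (0:ℝ)..π, (P y - ∑' j, a j * phiF (j+1) y) ^ 2)) := by
      refine intervalIntegral.tendsto_integral_filter_of_dominated_convergence
        (fun _ => (B + A) ^ 2) ?_ ?_ ?_ ?_
      · refine Filter.Eventually.of_forall fun N => ?_
        have hc : Continuous fun y => ∑ j ∈ Finset.range N, a j * phiF (j+1) y :=
          continuous_finsetSum _ fun j _ => (aux_phi_cont _).const_mul _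
        exact ((hPm.sub hc.measurable).pow_const 2).aestronglyMeasurable
      · exact Filter.Eventually.of_forall fun N => Filter.Eventually.of_forall fun y _ =>
          hdb _ _ (hPb y) (hQNb N y)
      · simp
      · refine Filter.Eventually.of_forall fun y _ => ?_
        exact (((hsum y).hasSum.tendsto_sum_nat).const_sub _).pow 2
    refine le_of_tendsto hlim ?_
    filter_upwards [Filter.eventually_ge_atTop (n-1)] with N hN
    refine (aux_fin n N hn hN a b).trans ?_
    have e1 : ∑ j ∈ Finset.range (n-1), (((j:ℝ)+1) * b j) ^ 2 ≤ K * S := by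
      refine (Finset.sum_le_sum fun j hj => h1 j (Finset.mem_range.mp hj)).trans ?_
      rw [← Finset.mul_sum]
      exact mul_le_mul_of_nonneg_left (hSle _) hK
    have e2 : ∑ j ∈ Finset.range N, ((if j < n - 1 then b j else 0) - a j) ^ 2
        ≤ K * ((n:ℝ) ^ 2)⁻¹ * S := by
      have : ∀ j ∈ Finset.range N, ((if j < n - 1 then b j else 0) - a j) ^ 2
          ≤ K * ((n:ℝ) ^ 2)⁻¹ * ((j:ℝ)+1) ^ (-(3/2):ℝ) := by
        intro j _
        split_ifs with h
        · exact h2 j h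
        · simpa using h3 j (by omega)
      refine (Finset.sum_le_sum this).trans ?_
      rw [← Finset.mul_sum]
      exact mul_le_mul_of_nonneg_left (hSle _) (by positivity)
    have e3 := mul_le_mul_of_nonneg_left e1 (by positivity : 0 ≤ (π / n) ^ 2)
    have e4 : (π / n) ^ 2 * (K * S) = π ^ 2 * S * K * ((n:ℝ) ^ 2)⁻¹ := by
      rw [div_pow, div_eq_mul_inv]; ring
    linarith

theorem aux_sin_lip (a b : ℝ) : |Real.sin a - Real.sin b| ≤ |a - b| := by
  rw [Real.sin_sub_sin, abs_mul, abs_mul]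
  have h1 : |Real.sin ((a-b)/2)| ≤ |(a-b)/2| := Real.abs_sin_le_abs
  have h2 := Real.abs_cos_le_one ((a+b)/2)
  have h3 : |(2:ℝ)| = 2 := by norm_num
  have h4 : |(a-b)/2| = |a-b|/2 := by rw [abs_div, h3]
  rw [h3]; rw [h4] at h1
  nlinarith [abs_nonneg (Real.sin ((a-b)/2)), abs_nonneg (Real.cos ((a+b)/2))]

theorem aux_phi_lip (j : ℕ) (a b : ℝ) : |phiF j a - phiF j b| ≤ j * |a - b| := by
  unfold phiF
  rw [← mul_sub, abs_mul, abs_of_nonneg (Real.sqrt_nonneg _)]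
  have h1 := aux_sin_lip (j * a) (j * b)
  rw [← mul_sub, abs_mul, Nat.abs_cast] at h1
  calc _ ≤ 1 * |Real.sin (j * a) - Real.sin (j * b)| :=
        mul_le_mul_of_nonneg_right aux_sqrt_le (abs_nonneg _)
    _ ≤ _ := by rw [one_mul]; exact h1

theorem aux_phiIn (n j : ℕ) (hn : 2 ≤ n) (x : ℝ) :
    |phiIn n j x| ≤ 1 ∧ |phiIn n j x - phiF j x| ≤ 4 * (j / n) := by
  have hn0 : (0:ℝ) < n := by positivity
  set h := π / n with hh
  have hpos : 0 < h := by positivity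
  set k := kap n x with hk
  have hk1 : k ≤ x := by
    have := Int.floor_le (x / h)
    rw [le_div_iff₀ hpos] at this
    rw [hk]; unfold kap; rw [← hh]; linarith
  have hk2 : x ≤ k + h := by
    have := (Int.lt_floor_add_one (x / h)).le
    rw [div_le_iff₀ hpos] at this
    rw [hk]; unfold kap; rw [← hh]; linarith
  set w := (n:ℝ) / π * (x - k) with hw
  have hwx : w = (x - k) / h := by rw [hw, hh]; field_simp
  have hw0 : 0 ≤ w := by rw [hwx]; exact div_nonneg (by linarith) hpos.le
  have hw1 : w ≤ 1 := by rw [hwx, div_le_one hpos]; linarith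
  have e : phiIn n j x = (1 - w) * phiF j k + w * phiF j (k + h) := by
    unfold phiIn; rw [← hk, ← hh, ← hw]; ring
  have hp1 := abs_le.1 (aux_phi_le j k)
  have hp2 := abs_le.1 (aux_phi_le j (k + h))
  rw [e]
  constructor
  · rw [abs_le]; constructor <;> nlinarith
  · have l1 := aux_phi_lip j k x
    have l2 := aux_phi_lip j (k + h) x
    have m1 : |k - x| ≤ h := by rw [abs_le]; constructor <;> linarith
    have m2 : |k + h - x| ≤ h := by rw [abs_le]; constructor <;> linarith
    have hj : (0:ℝ) ≤ j := Nat.cast_nonneg j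
    have n1 := abs_le.1 (l1.trans (mul_le_mul_of_nonneg_left m1 hj))
    have n2 := abs_le.1 (l2.trans (mul_le_mul_of_nonneg_left m2 hj))
    have hb : (j:ℝ) * h ≤ 4 * (j / n) := by
      have : (j:ℝ) * h = π * (j / n) := by rw [hh]; ring
      rw [this]
      exact mul_le_mul_of_nonneg_right Real.pi_le_four (by positivity)
    refine le_trans ?_ hb
    rw [abs_le]; constructor <;> nlinarith

theorem aux_mu (n j : ℕ) (hn : 2 ≤ n) (hj : j < n - 1) :
    -lamEig (j+1) n ≤ ((j:ℝ)+1)^2 ∧ 2/5 * ((j:ℝ)+1)^2 ≤ -lamEig (j+1) n ∧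
    ((j:ℝ)+1)^2 - (-lamEig (j+1) n) ≤ 3 * (((j:ℝ)+1)/n) * ((j:ℝ)+1)^2 := by
  have hn0 : (0:ℝ) < n := by positivity
  have hJn : ((j:ℝ)+1) < n := by
    have : j + 1 < n := by omega
    exact_mod_cast this
  set J : ℝ := (j:ℝ)+1 with hJ
  have hJ0 : 0 < J := by positivity
  set θ := J * π / (2 * n) with hθ
  have hθ0 : 0 < θ := by positivity
  have hθ1 : θ < π / 2 := by
    rw [hθ, div_lt_div_iff₀ (by positivity) (by positivity)]
    nlinarith [Real.pi_pos]
  have e : -lamEig (j+1) n = 4 * (n:ℝ)^2 / π^2 * Real.sin θ ^ 2 := by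
    unfold lamEig; push_cast; rw [← hJ, ← hθ]; ring
  set A := 4 * (n:ℝ)^2 / π^2 with hA
  have hA0 : 0 < A := by positivity
  have eJ : J^2 = A * θ^2 := by rw [hA, hθ]; field_simp; norm_num
  have hs0 : 0 < Real.sin θ := Real.sin_pos_of_pos_of_lt_pi hθ0 (by linarith [Real.pi_pos])
  have hs1 : Real.sin θ ≤ θ := Real.sin_le hθ0.le
  have hs2 := Real.mul_le_sin hθ0.le hθ1.le
  have hpi2 : π ^ 2 ≤ 10 := by nlinarith [Real.pi_lt_d2, Real.pi_pos]
  have hsq : Real.sin θ ^ 2 ≤ θ ^ 2 := pow_le_pow_left₀ hs0.le hs1 2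
  rw [e, eJ]
  refine ⟨mul_le_mul_of_nonneg_left hsq hA0.le, ?_, ?_⟩
  · have h1 : (2/π * θ)^2 ≤ Real.sin θ ^ 2 := pow_le_pow_left₀ (by positivity) hs2 2
    have h2 : (2/π * θ)^2 = 4 / π^2 * θ^2 := by ring
    have h3 : 2/5 ≤ 4 / π^2 := by rw [div_le_div_iff₀ (by norm_num) (by positivity)]; linarith
    have h4 : 2/5 * θ^2 ≤ Real.sin θ ^ 2 := by
      rw [h2] at h1
      exact (mul_le_mul_of_nonneg_right h3 (by positivity)).trans h1
    nlinarith
  · have hc0 : 0 < Real.cos θ := Real.cos_pos_of_mem_Ioo ⟨by linarith, hθ1⟩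
    have h1 : θ * Real.cos θ ≤ Real.sin θ := by
      have := (Real.lt_tan hθ0 hθ1).le
      rwa [Real.tan_eq_sin_div_cos, le_div_iff₀ hc0] at this
    have h2 : (θ * Real.cos θ)^2 ≤ Real.sin θ ^ 2 := pow_le_pow_left₀ (by positivity) h1 2
    have h3 := Real.sin_sq_add_cos_sq θ
    have h4 : θ^2 - Real.sin θ ^ 2 ≤ θ^2 * θ^2 := by
      have : (θ * Real.cos θ)^2 = θ^2 - θ^2 * Real.sin θ ^ 2 := by
        linear_combination θ^2 * h3
      nlinarith [sq_nonneg θ]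
    have h5 : θ^2 ≤ 3 * (J / n) := by
      have : θ^2 = (π^2/4 * (J/n)) * (J / n) := by rw [hθ]; field_simp; norm_num
      rw [this]
      have hd1 : J / n ≤ 1 := by rw [div_le_one hn0]; exact hJn.le
      have hd0 : 0 ≤ J / n := by positivity
      nlinarith [mul_nonneg hd0 hd0]
    calc A * θ^2 - A * Real.sin θ^2 = A * (θ^2 - Real.sin θ^2) := by ring
      _ ≤ A * (θ^2 * (3 * (J/n))) := by
        refine mul_le_mul_of_nonneg_left (h4.trans ?_) hA0.le
        exact mul_le_mul_of_nonneg_left h5 (sq_nonneg _)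
      _ = _ := by ring

theorem aux_exp_bd (u : ℝ) (hu : 0 ≤ u) :
    13 * (1 + u) * Real.exp (-(4/25 * u)) ≤ 1300 / (1 + u) := by
  have h := Real.quadratic_le_exp_of_nonneg (x := 4/25 * u) (by positivity)
  rw [Real.exp_neg, ← div_eq_mul_inv, div_le_div_iff₀ (Real.exp_pos _) (by positivity)]
  nlinarith

theorem aux_pow (r : ℕ) (hr : r ≤ 1) (J s M : ℝ) (hJ : 0 < J) (hs : 0 < s) (hM0 : 0 ≤ M)
    (hM : M ≤ 1300 / (1 + J^4 * s)) :
    (J * (J^2)^r * M)^2 ≤ (1300^2 * s ^ (-(7/8 + r):ℝ)) * J ^ (-(3/2):ℝ) := by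
  set u := J^4 * s with hu
  have hu0 : 0 < u := by positivity
  have hr1 : (r:ℝ) ≤ 1 := by exact_mod_cast hr
  have h1 : u ^ ((7/8 + r):ℝ) ≤ (1 + u)^2 := by
    calc u ^ ((7/8 + r):ℝ) ≤ (1+u) ^ ((7/8 + r):ℝ) :=
          Real.rpow_le_rpow hu0.le (by linarith) (by positivity)
      _ ≤ (1+u) ^ (2:ℝ) := Real.rpow_le_rpow_of_exponent_le (by linarith) (by linarith)
      _ = _ := by norm_cast
  have h2 : M^2 ≤ 1300^2 * u ^ (-(7/8 + r):ℝ) := by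
    rw [Real.rpow_neg hu0.le]
    calc M^2 ≤ (1300 / (1+u))^2 := pow_le_pow_left₀ hM0 hM 2
      _ = 1300^2 * ((1+u)^2)⁻¹ := by rw [div_pow, div_eq_mul_inv]
      _ ≤ _ := by
        refine mul_le_mul_of_nonneg_left ?_ (by norm_num)
        exact inv_anti₀ (by positivity) h1
  have h3 : u ^ (-(7/8 + r):ℝ) = J ^ (-(7/2 + 4 * r):ℝ) * s ^ (-(7/8 + r):ℝ) := by
    rw [hu, Real.mul_rpow (by positivity) hs.le, ← Real.rpow_natCast J 4, ← Real.rpow_mul hJ.le]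
    congr 2; push_cast; ring
  have h4 : (J * (J^2)^r)^2 * J ^ (-(7/2 + 4 * r):ℝ) = J ^ (-(3/2):ℝ) := by
    have : (J * (J^2)^r)^2 = J ^ ((2 + 4 * r : ℕ):ℝ) := by rw [Real.rpow_natCast]; ring
    rw [this, ← Real.rpow_add hJ]
    congr 1; push_cast; ring
  calc (J * (J^2)^r * M)^2 = (J * (J^2)^r)^2 * M^2 := by ring
    _ ≤ (J * (J^2)^r)^2 * (1300^2 * u ^ (-(7/8 + r):ℝ)) :=
      mul_le_mul_of_nonneg_left h2 (sq_nonneg _)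
    _ = (1300^2 * s ^ (-(7/8 + r):ℝ)) * ((J * (J^2)^r)^2 * J ^ (-(7/2 + 4 * r):ℝ)) := by
      rw [h3]; ring
    _ = _ := by rw [h4]

theorem aux_core (r : ℕ) (hr : r ≤ 1) (δ J2 m u p q E1 E2 Ec : ℝ) (hδ : 0 ≤ δ) (hm : 0 ≤ m)
    (hmJ : m ≤ J2) (hd : J2 - m ≤ 3 * δ * J2) (hu : 0 ≤ u) (hp : |p| ≤ 1)
    (hpq : |p - q| ≤ 4 * δ) (h12 : 0 ≤ E1 - E2) (h12' : E1 - E2 ≤ 6 * δ * u * Ec)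
    (hE2 : 0 ≤ E2) (hE1c : E1 ≤ Ec) :
    |m^r * E1 * p - J2^r * E2 * q| ≤ δ * (J2^r * (13 * (1 + u) * Ec)) := by
  have hEc : 0 ≤ Ec := by linarith
  have hJ2 : 0 ≤ J2 := hm.trans hmJ
  have k0 : |E1 * p - E2 * q| ≤ δ * (4 + 6 * u) * Ec := by
    have e : E1 * p - E2 * q = (E1 - E2) * p + E2 * (p - q) := by ring
    rw [e]
    refine (abs_add_le _ _).trans ?_
    rw [abs_mul, abs_mul, abs_of_nonneg h12, abs_of_nonneg hE2]
    have a1 : (E1 - E2) * |p| ≤ 6 * δ * u * Ec :=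
      (mul_le_of_le_one_right h12 hp).trans h12'
    have a2 : E2 * |p - q| ≤ Ec * (4 * δ) :=
      mul_le_mul (by linarith) hpq (abs_nonneg _) hEc
    linarith
  have hδu : 0 ≤ δ * u * Ec := by positivity
  have hδE : 0 ≤ δ * Ec := by positivity
  interval_cases r
  · simp only [pow_zero, one_mul]
    refine k0.trans ?_
    nlinarith
  · simp only [pow_one]
    have e : m * E1 * p - J2 * E2 * q = J2 * (E1 * p - E2 * q) - (J2 - m) * E1 * p := by ring
    rw [e]
    refine (abs_sub _ _).trans ?_
    rw [abs_mul, abs_mul, abs_mul, abs_of_nonneg hJ2, abs_of_nonneg (by linarith : 0 ≤ J2 - m),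
      abs_of_nonneg (by linarith : 0 ≤ E1)]
    have a1 := mul_le_mul_of_nonneg_left k0 hJ2
    have a2 : (J2 - m) * E1 * |p| ≤ 3 * δ * J2 * Ec := by
      refine (mul_le_of_le_one_right (mul_nonneg (by linarith) (by linarith)) hp).trans ?_
      exact mul_le_mul hd hE1c (by linarith) (by positivity)
    have a3 : 0 ≤ J2 * (δ * u * Ec) := by positivity
    have a4 : 0 ≤ J2 * (δ * Ec) := by positivity
    nlinarith

theorem aux_r (r : ℕ) (hr : r ≤ 1) (n : ℕ) (hn : 2 ≤ n) (s : ℝ) (hs : 0 < s) (x : ℝ) :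
    IntervalIntegrable (fun y => (∑ j ∈ Finset.range (n-1),
        ((-lamEig (j+1) n)^r * Real.exp (-(lamEig (j+1) n)^2 * s) * phiIn n (j+1) x)
          * phiF (j+1) (kap n y)
        - ∑' j : ℕ, ((((j:ℝ)+1)^2)^r * Real.exp (-((j:ℝ)+1)^4 * s) * phiF (j+1) x)
          * phiF (j+1) y) ^ 2) MeasureTheory.volume 0 π ∧
    ∫ y in (0:ℝ)..π, (∑ j ∈ Finset.range (n-1),
        ((-lamEig (j+1) n)^r * Real.exp (-(lamEig (j+1) n)^2 * s) * phiIn n (j+1) x)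
          * phiF (j+1) (kap n y)
        - ∑' j : ℕ, ((((j:ℝ)+1)^2)^r * Real.exp (-((j:ℝ)+1)^4 * s) * phiF (j+1) x)
          * phiF (j+1) y) ^ 2
      ≤ (2 * (π ^ 2 + 1) * ∑' j : ℕ, ((j:ℝ)+1) ^ (-(3/2):ℝ)) *
        (1300^2 * s ^ (-(7/8 + r):ℝ)) * ((n:ℝ) ^ 2)⁻¹ := by
  have hn0 : (0:ℝ) < n := by positivity
  have hM0 : ∀ J : ℝ, 0 < J → 0 ≤ 13 * (1 + J^4*s) * Real.exp (-(4/25 * (J^4*s))) := by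
    intro J hJ; positivity
  have hpw : ∀ J : ℝ, 0 < J → (J * (J^2)^r * (13 * (1 + J^4*s) * Real.exp (-(4/25 * (J^4*s)))))^2
      ≤ (1300^2 * s ^ (-(7/8 + r):ℝ)) * J ^ (-(3/2):ℝ) := fun J hJ =>
    aux_pow r hr J s _ hJ hs (hM0 J hJ) (aux_exp_bd _ (by positivity))
  have hEc : ∀ J : ℝ, 0 < J → Real.exp (-J^4 * s) ≤ Real.exp (-(4/25 * (J^4*s))) := by
    intro J hJ
    refine Real.exp_le_exp.2 ?_
    have : 0 < J^4*s := by positivity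
    nlinarith
  have hEcM : ∀ J : ℝ, 0 < J → Real.exp (-(4/25 * (J^4*s)))
      ≤ 13 * (1 + J^4*s) * Real.exp (-(4/25 * (J^4*s))) := by
    intro J hJ
    have : 0 < J^4*s := by positivity
    exact le_mul_of_one_le_left (Real.exp_pos _).le (by linarith)
  have hmu : ∀ j < n - 1, 0 ≤ -lamEig (j+1) n ∧ Real.exp (-(lamEig (j+1) n)^2 * s)
      ≤ Real.exp (-(4/25 * (((j:ℝ)+1)^4*s))) := by
    intro j hj
    obtain ⟨m1, m2, m3⟩ := aux_mu n j hn hj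
    have hm : 0 ≤ -lamEig (j+1) n := le_trans (by positivity) m2
    refine ⟨hm, Real.exp_le_exp.2 ?_⟩
    have : (2/5 * ((j:ℝ)+1)^2)^2 ≤ (-lamEig (j+1) n)^2 := pow_le_pow_left₀ (by positivity) m2 2
    have h5 := mul_le_mul_of_nonneg_right this hs.le
    nlinarith
  refine aux_abs n hn
    (fun j => (((j:ℝ)+1)^2)^r * Real.exp (-((j:ℝ)+1)^4 * s) * phiF (j+1) x)
    (fun j => (-lamEig (j+1) n)^r * Real.exp (-(lamEig (j+1) n)^2 * s) * phiIn n (j+1) x)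
    (1300^2 * s ^ (-(7/8 + r):ℝ)) (by positivity) ?_ ?_ ?_ ?_
  · have hsm : Summable fun j : ℕ => s⁻¹ * (((j:ℝ)+1)^2)⁻¹ := by
      refine Summable.mul_left _ ?_
      have := (summable_nat_add_iff 1).2 (Real.summable_nat_pow_inv.2 (by norm_num : 1 < 2))
      simpa using this
    refine Summable.of_nonneg_of_le (fun j => abs_nonneg _) (fun j => ?_) hsm
    set J : ℝ := (j:ℝ)+1 with hJ
    have hJ1 : 1 ≤ J := by rw [hJ]; linarith [(Nat.cast_nonneg j : (0:ℝ) ≤ j)]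
    have hJ0 : 0 < J := by linarith
    have hu : 0 < J^4*s := by positivity
    rw [abs_mul, abs_mul, abs_of_nonneg (by positivity : 0 ≤ (J^2)^r), abs_of_pos (Real.exp_pos _)]
    have e1 : (J^2)^r ≤ J^2 := by
      calc (J^2)^r ≤ (J^2)^1 := pow_le_pow_right₀ (by nlinarith) hr
        _ = _ := pow_one _
    have e2 : Real.exp (-J^4 * s) ≤ (J^4*s)⁻¹ := by
      rw [show -J^4 * s = -(J^4*s) by ring, Real.exp_neg]
      exact inv_anti₀ hu (by linarith [Real.add_one_le_exp (J^4*s)])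
    calc (J^2)^r * Real.exp (-J^4 * s) * |phiF (j+1) x|
        ≤ (J^2)^r * Real.exp (-J^4 * s) := mul_le_of_le_one_right (by positivity) (aux_phi_le _ _)
      _ ≤ J^2 * (J^4*s)⁻¹ := mul_le_mul e1 e2 (Real.exp_pos _).le (by positivity)
      _ = _ := by field_simp
  · intro j hj
    obtain ⟨m1, m2, m3⟩ := aux_mu n j hn hj
    obtain ⟨hm, hE⟩ := hmu j hj
    set J : ℝ := (j:ℝ)+1 with hJ
    have hJ0 : 0 < J := by positivity
    refine le_trans ?_ (hpw J hJ0)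
    refine sq_le_sq' ?_ ?_ <;> [rw [neg_le]; skip]
    all_goals
      refine le_trans (b := |J * ((-lamEig (j+1) n)^r * Real.exp (-(lamEig (j+1) n)^2 * s)
        * phiIn n (j+1) x)|) ?_ ?_
      · first | exact neg_le_abs _ | exact le_abs_self _
      rw [abs_mul, abs_mul, abs_mul, abs_of_pos hJ0, abs_of_nonneg (pow_nonneg hm r),
        abs_of_pos (Real.exp_pos _), mul_assoc J]
      refine mul_le_mul_of_nonneg_left ?_ hJ0.le
      refine (mul_le_of_le_one_right (mul_nonneg (pow_nonneg hm r) (Real.exp_pos _).le)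
        (aux_phiIn n (j+1) hn x).1).trans ?_
      exact mul_le_mul (pow_le_pow_left₀ hm m1 r) (hE.trans (hEcM J hJ0)) (Real.exp_pos _).le
        (by positivity)
  · intro j hj
    obtain ⟨m1, m2, m3⟩ := aux_mu n j hn hj
    obtain ⟨hm, hE⟩ := hmu j hj
    obtain ⟨x1, x2⟩ := aux_phiIn n (j+1) hn x
    push_cast at x2
    set J : ℝ := (j:ℝ)+1 with hJ
    have hJ0 : 0 < J := by positivity
    have hδ : 0 ≤ J / n := by positivity
    set m := -lamEig (j+1) n with hmdef
    have hm2 : lamEig (j+1) n ^ 2 = m^2 := by rw [hmdef]; ring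
    rw [hm2] at hE ⊢
    have hle : m^2 ≤ J^4 := by
      calc m^2 ≤ (J^2)^2 := pow_le_pow_left₀ hm m1 2
        _ = _ := by ring
    have hdiff : J^4 - m^2 ≤ 6 * (J/n) * J^4 := by
      have e : J^4 - m^2 = (J^2 - m) * (J^2 + m) := by ring
      rw [e]
      calc (J^2 - m) * (J^2 + m) ≤ (3 * (J/n) * J^2) * (2 * J^2) :=
            mul_le_mul m3 (by linarith) (by positivity) (by positivity)
        _ = _ := by ring
    have h12 : 0 ≤ Real.exp (-m^2*s) - Real.exp (-J^4*s) := by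
      rw [sub_nonneg]
      exact Real.exp_le_exp.2 (by nlinarith)
    have h12' : Real.exp (-m^2*s) - Real.exp (-J^4*s)
        ≤ 6 * (J/n) * (J^4*s) * Real.exp (-(4/25 * (J^4*s))) := by
      have e : Real.exp (-J^4*s) = Real.exp (-m^2*s) * Real.exp (-((J^4 - m^2)*s)) := by
        rw [← Real.exp_add]; congr 1; ring
      have e2 := Real.add_one_le_exp (-((J^4 - m^2)*s))
      have e3 : (J^4 - m^2)*s ≤ 6 * (J/n) * (J^4*s) := by
        calc (J^4 - m^2)*s ≤ (6 * (J/n) * J^4)*s := mul_le_mul_of_nonneg_right hdiff hs.le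
          _ = _ := by ring
      calc Real.exp (-m^2*s) - Real.exp (-J^4*s)
          = Real.exp (-m^2*s) * (1 - Real.exp (-((J^4 - m^2)*s))) := by rw [e]; ring
        _ ≤ Real.exp (-m^2*s) * (6 * (J/n) * (J^4*s)) :=
          mul_le_mul_of_nonneg_left (by linarith) (Real.exp_pos _).le
        _ ≤ Real.exp (-(4/25 * (J^4*s))) * (6 * (J/n) * (J^4*s)) :=
          mul_le_mul_of_nonneg_right hE (by positivity)
        _ = _ := by ring
    have key := aux_core r hr (J/n) (J^2) m (J^4*s) (phiIn n (j+1) x) (phiF (j+1) x)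
      (Real.exp (-m^2*s)) (Real.exp (-J^4*s)) (Real.exp (-(4/25 * (J^4*s)))) hδ hm m1 m3
      (by positivity) x1 x2 h12 h12' (Real.exp_pos _).le hE
    have k2 := sq_le_sq' (abs_le.1 key).1 (abs_le.1 key).2
    refine k2.trans ?_
    have k3 := mul_le_mul_of_nonneg_right (hpw J hJ0) (by positivity : 0 ≤ ((n:ℝ)^2)⁻¹)
    refine le_trans (le_of_eq ?_) (k3.trans (le_of_eq ?_))
    · field_simp
    · ring
  · intro j hj
    set J : ℝ := (j:ℝ)+1 with hJ
    have hJ0 : 0 < J := by positivity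
    have hJn : (n:ℝ) ≤ J := by
      have : n ≤ j + 1 := by omega
      rw [hJ]; exact_mod_cast this
    have hδ : 1 ≤ J / n := by rw [le_div_iff₀ hn0]; linarith
    have key : |(J^2)^r * Real.exp (-J^4 * s) * phiF (j+1) x| ≤
        J/n * ((J^2)^r * (13 * (1 + J^4*s) * Real.exp (-(4/25 * (J^4*s))))) := by
      rw [abs_mul, abs_mul, abs_of_nonneg (by positivity : 0 ≤ (J^2)^r), abs_of_pos (Real.exp_pos _)]
      have hnn : 0 ≤ (J^2)^r * (13 * (1 + J^4*s) * Real.exp (-(4/25 * (J^4*s)))) := by positivity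
      calc (J^2)^r * Real.exp (-J^4 * s) * |phiF (j+1) x|
        ≤ (J^2)^r * Real.exp (-J^4 * s) := mul_le_of_le_one_right (by positivity) (aux_phi_le _ _)
        _ ≤ (J^2)^r * (13 * (1 + J^4*s) * Real.exp (-(4/25 * (J^4*s)))) :=
          mul_le_mul_of_nonneg_left ((hEc J hJ0).trans (hEcM J hJ0)) (by positivity)
        _ ≤ _ := le_mul_of_one_le_left hnn hδ
    have k2 := sq_le_sq' (abs_le.1 key).1 (abs_le.1 key).2
    refine k2.trans ?_
    have k3 := mul_le_mul_of_nonneg_right (hpw J hJ0) (by positivity : 0 ≤ ((n:ℝ)^2)⁻¹)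
    refine le_trans (le_of_eq ?_) (k3.trans (le_of_eq ?_))
    · field_simp
    · ring

theorem aux_time (F : ℝ → ℝ) (B p t T : ℝ) (hB : 0 ≤ B) (hp : p < 1) (ht : 0 < t) (htT : t ≤ T)
    (hF : ∀ s ∈ Set.Ioc 0 t, F s ≤ B * s ^ (-p)) :
    ∫ s in (0:ℝ)..t, F s ≤ B * (T ^ (1 - p) / (1 - p)) := by
  have hp' : 0 < 1 - p := by linarith
  by_cases hFi : IntervalIntegrable F MeasureTheory.volume 0 t
  · have hi : IntervalIntegrable (fun s : ℝ => B * s ^ (-p)) MeasureTheory.volume 0 t :=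
      (intervalIntegral.intervalIntegrable_rpow' (by linarith)).const_mul _
    have h1 : ∫ s in (0:ℝ)..t, F s ≤ ∫ s in (0:ℝ)..t, B * s ^ (-p) :=
      intervalIntegral.integral_mono_on_of_le_Ioo ht.le hFi hi
        fun s hs => hF s ⟨hs.1, hs.2.le⟩
    refine h1.trans ?_
    rw [intervalIntegral.integral_const_mul, integral_rpow (Or.inl (by linarith)),
      show -p + 1 = 1 - p by ring, Real.zero_rpow hp'.ne', sub_zero]
    refine mul_le_mul_of_nonneg_left ?_ hB
    exact div_le_div_of_nonneg_right (Real.rpow_le_rpow ht.le htT hp'.le) hp'.le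
  · rw [intervalIntegral.integral_undef hFi]
    have : 0 < T := by linarith
    positivity

/-- For every `T > 0` there is `C = C(T) > 0`, independent of `n`, such that for all
`n ≥ 2` and `(t,x) ∈ (0,T] × (0,π)`:
`∫₀ᵗ∫₀^π |Δ_nG^n_s(x,y) - ΔG_s(x,y)| dy ds ≤ C n⁻¹` and
`∫₀ᵗ∫₀^π |G^n_s(x,y) - G_s(x,y)|² dy ds ≤ C n⁻²`. -/
theorem stmt16 (T : ℝ) (hT : 0 < T) :
    ∃ C : ℝ, 0 < C ∧ ∀ n : ℕ, 2 ≤ n → ∀ t ∈ Set.Ioc 0 T, ∀ x ∈ Set.Ioo 0 Real.pi,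
      ((∫ s in (0:ℝ)..t, ∫ y in (0:ℝ)..Real.pi, |DGn n s x y - DGF s x y|)
          ≤ C * ((n : ℝ))⁻¹)
      ∧ ((∫ s in (0:ℝ)..t, ∫ y in (0:ℝ)..Real.pi, (Gn n s x y - GF s x y) ^ 2)
          ≤ C * ((n : ℝ) ^ 2)⁻¹) := by
  set C1 : ℝ := (2 * (π ^ 2 + 1) * ∑' j : ℕ, ((j:ℝ)+1) ^ (-(3/2):ℝ)) with hC1
  have hC1n : 0 ≤ C1 := by
    have : 0 ≤ ∑' j : ℕ, ((j:ℝ)+1) ^ (-(3/2):ℝ) := tsum_nonneg fun j => by positivity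
    positivity
  set D1 : ℝ := (π + C1 * 1300^2) / 2 with hD1
  have hD1p : 0 < D1 := by positivity
  have hc1 : 0 ≤ D1 * (T ^ (1 - 15/16 : ℝ) / (1 - 15/16)) :=
    mul_nonneg hD1p.le (div_nonneg (by positivity) (by norm_num))
  have hc2 : 0 ≤ C1 * 1300^2 * (T ^ (1 - 7/8 : ℝ) / (1 - 7/8)) :=
    mul_nonneg (by positivity) (div_nonneg (by positivity) (by norm_num))
  refine ⟨D1 * (T ^ (1 - 15/16 : ℝ) / (1 - 15/16))
    + C1 * 1300^2 * (T ^ (1 - 7/8 : ℝ) / (1 - 7/8)) + 1, by linarith, ?_⟩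
  intro n hn t ht x _
  have hn0 : (0:ℝ) < n := by positivity
  constructor
  · have := aux_time (fun s => ∫ y in (0:ℝ)..π, |DGn n s x y - DGF s x y|) (D1 * (n:ℝ)⁻¹) (15/16) t T
      (by positivity) (by norm_num) ht.1 ht.2 ?_
    · refine this.trans ?_
      have h0 : 0 < (n:ℝ)⁻¹ := by positivity
      rw [show D1 * (n:ℝ)⁻¹ * (T ^ (1 - 15/16 : ℝ) / (1 - 15/16))
        = (D1 * (T ^ (1 - 15/16 : ℝ) / (1 - 15/16))) * (n:ℝ)⁻¹ by ring]
      exact mul_le_mul_of_nonneg_right (by linarith) h0.le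
    · intro s hs
      obtain ⟨hi, hb⟩ := aux_r 1 le_rfl n hn s hs.1 x
      rw [← hC1] at hb
      have e : ∀ y, (∑ j ∈ Finset.range (n-1),
          ((-lamEig (j+1) n)^1 * Real.exp (-(lamEig (j+1) n)^2 * s) * phiIn n (j+1) x)
            * phiF (j+1) (kap n y)
          - ∑' j : ℕ, ((((j:ℝ)+1)^2)^1 * Real.exp (-((j:ℝ)+1)^4 * s) * phiF (j+1) x)
            * phiF (j+1) y) = -(DGn n s x y - DGF s x y) := by
        intro y
        simp only [DGn, DGF, pow_one, neg_mul, Finset.sum_neg_distrib]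
        ring
      simp only [e, neg_sq] at hi hb
      have hs0 : 0 < s := hs.1
      set q : ℝ := s ^ (-(15/16):ℝ) with hq
      have hq0 : 0 < q := by positivity
      have hqq : s ^ (-(7/8 + ((1:ℕ):ℝ)):ℝ) = q * q := by
        rw [hq, ← Real.rpow_add hs0]; congr 1; push_cast; norm_num
      set ε : ℝ := (n:ℝ)⁻¹ * q with hε
      have hε0 : 0 < ε := by positivity
      have hmono : ∫ y in (0:ℝ)..π, |DGn n s x y - DGF s x y|
          ≤ ∫ y in (0:ℝ)..π, (ε / 2 + (2 * ε)⁻¹ * (DGn n s x y - DGF s x y) ^ 2) := by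
        rw [intervalIntegral.integral_of_le Real.pi_pos.le,
          intervalIntegral.integral_of_le Real.pi_pos.le]
        refine MeasureTheory.integral_mono_of_nonneg
          (Filter.Eventually.of_forall fun y => abs_nonneg _)
          ((intervalIntegrable_const (μ := MeasureTheory.volume) (a := 0) (b := π)
            (c := ε / 2)).add (hi.const_mul _)).1 (Filter.Eventually.of_forall fun y => ?_)
        simp only
        set z := DGn n s x y - DGF s x y
        rw [← sq_abs z]
        have h1 : ε / 2 + (2 * ε)⁻¹ * |z| ^ 2 - |z| = (2 * ε)⁻¹ * (|z| - ε) ^ 2 := by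
          field_simp; ring
        have h2 : 0 ≤ (2 * ε)⁻¹ * (|z| - ε) ^ 2 := by positivity
        linarith
      refine hmono.trans ?_
      rw [intervalIntegral.integral_add intervalIntegrable_const (hi.const_mul _),
        intervalIntegral.integral_const_mul, intervalIntegral.integral_const, smul_eq_mul]
      rw [hqq] at hb
      have h3 := mul_le_mul_of_nonneg_left hb (by positivity : 0 ≤ (2 * ε)⁻¹)
      have h4 : (2 * ε)⁻¹ * (C1 * (1300 ^ 2 * (q * q)) * ((n:ℝ) ^ 2)⁻¹)
          = C1 * 1300^2 / 2 * ((n:ℝ)⁻¹ * q) := by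
        rw [hε]; field_simp
      rw [h4] at h3
      have h5 : D1 * (n:ℝ)⁻¹ * q = (π - 0) * (ε / 2) + C1 * 1300^2 / 2 * ((n:ℝ)⁻¹ * q) := by
        rw [hD1, hε]; ring
      linarith
  · have := aux_time (fun s => ∫ y in (0:ℝ)..π, (Gn n s x y - GF s x y) ^ 2)
      (C1 * 1300^2 * ((n:ℝ)^2)⁻¹) (7/8) t T (by positivity) (by norm_num) ht.1 ht.2 ?_
    · refine this.trans ?_
      have h0 : 0 < ((n:ℝ)^2)⁻¹ := by positivity
      rw [show C1 * 1300^2 * ((n:ℝ)^2)⁻¹ * (T ^ (1 - 7/8 : ℝ) / (1 - 7/8))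
        = (C1 * 1300^2 * (T ^ (1 - 7/8 : ℝ) / (1 - 7/8))) * ((n:ℝ)^2)⁻¹ by ring]
      exact mul_le_mul_of_nonneg_right (by linarith) h0.le
    · intro s hs
      obtain ⟨hi, hb⟩ := aux_r 0 zero_le_one n hn s hs.1 x
      rw [← hC1] at hb
      simp only [pow_zero, one_mul, Nat.cast_zero, add_zero] at hb
      simp only [Gn, GF]
      refine hb.trans (le_of_eq ?_)
      ring
end
end
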